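/- Let M be a compact connected boundaryless topological manifold of dimension n with a compatible metric and let f : M → M be an expansive homeomorphism such that the closure of Per_H^{n−1} equals M. Then the set 𝒮 of singularities of f (the points of M admitting no local product structure) is finite. -/

import Mathlib

open Metric Set

variable {M : Type*} [MetricSpace M]

/-- Iterates of a homeomorphism, indexed by `ℤ`. -/
def iterZ (f : M ≃ₜ M) (k : ℤ) (x : M) : M := (f.toEquiv ^ k) x

/-- `f` is expansive with expansivity constant `α`. -/
def IsExpansive (f : M ≃ₜ M) (α : ℝ) : Prop :=
  ∀ x y : M, x ≠ y → ∃ k : ℤ, α < dist (iterZ f k x) (iterZ f k y)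

/-- Stable set of `x`. -/
def Ws (f : M ≃ₜ M) (x : M) : Set M :=
  {y | Filter.Tendsto (fun k : ℤ => dist (iterZ f k x) (iterZ f k y)) Filter.atTop (nhds 0)}

/-- Unstable set of `x`. -/
def Wu (f : M ≃ₜ M) (x : M) : Set M :=
  {y | Filter.Tendsto (fun k : ℤ => dist (iterZ f k x) (iterZ f k y)) Filter.atBot (nhds 0)}

/-- Local (`ε`-local) stable set of `x`. -/
def WsLoc (f : M ≃ₜ M) (ε : ℝ) (x : M) : Set M :=
  {y | ∀ k : ℤ, 0 ≤ k → dist (iterZ f k x) (iterZ f k y) ≤ ε}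

/-- Local (`ε`-local) unstable set of `x`. -/
def WuLoc (f : M ≃ₜ M) (ε : ℝ) (x : M) : Set M :=
  {y | ∀ k : ℤ, k ≤ 0 → dist (iterZ f k x) (iterZ f k y) ≤ ε}

/-- The model space `ℝ^r × ℝ^{n-r}`. -/
abbrev ModelSp (n r : ℕ) := (Fin r → ℝ) × (Fin (n - r) → ℝ)

/-- The model hyperbolic linear map `L(a,b) = (a/2, 2b)`. -/
noncomputable def modelL (n r : ℕ) : ModelSp n r → ModelSp n r :=
  fun q => (fun i => q.1 i / 2, fun i => 2 * q.2 i)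

/-- Topologically hyperbolic periodic points of index `r` (`Per_H^r`). -/
def PerHr (f : M ≃ₜ M) (n r : ℕ) : Set M :=
  {p | ∃ l : ℕ, 1 ≤ l ∧ (f.toEquiv ^ l) p = p ∧
    ∃ (U : Set M) (V : Set (ModelSp n r)) (h : U ≃ₜ V),
      IsOpen U ∧ IsOpen V ∧ (0 : ModelSp n r) ∈ V ∧
      ∃ hp : p ∈ U, ((h ⟨p, hp⟩ : V) : ModelSp n r) = 0 ∧
        ∀ z : M, ∀ hz : z ∈ U, ∀ hz' : (f.toEquiv ^ l) z ∈ U,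
          ((h ⟨(f.toEquiv ^ l) z, hz'⟩ : V) : ModelSp n r) = modelL n r (h ⟨z, hz⟩)}

/-- All topologically hyperbolic periodic points (`Per_H`). -/
def PerH (f : M ≃ₜ M) (n : ℕ) : Set M := ⋃ r ∈ Finset.range (n + 1), PerHr f n r

/-- `p` admits a local product structure. -/
def AdmitsLPS (f : M ≃ₜ M) (n : ℕ) (p : M) : Prop :=
  ∃ (k : ℕ) (h : (Fin k → ℝ) × (Fin (n - k) → ℝ) → M) (ε : ℝ),
    0 < ε ∧ Topology.IsEmbedding h ∧ p ∈ Set.range h ∧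
    ∀ x : Fin k → ℝ, ∀ y : Fin (n - k) → ℝ,
      h '' ({x} ×ˢ univ) = WsLoc f ε (h (x, y)) ∩ Set.range h ∧
      h '' (univ ×ˢ {y}) = WuLoc f ε (h (x, y)) ∩ Set.range h


/-! ## Part 1: stable relations -/

/-- forward `ε`-closeness -/
def RS {M : Type*} [MetricSpace M] (f : M ≃ₜ M) (ε : ℝ) (x y : M) : Prop :=
  ∀ k : ℕ, dist (f^[k] x) (f^[k] y) ≤ ε

/-- expansivity in terms of `RS` -/
def Xp {M : Type*} [MetricSpace M] (f : M ≃ₜ M) (α : ℝ) : Prop :=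
  ∀ x y : M, RS f α x y → RS f.symm α x y → x = y

section part1
variable {X : Type*} [MetricSpace X] {f : X ≃ₜ X} {α ε : ℝ}

lemma Xp.sym (h : Xp f α) : Xp f.symm α := fun x y h1 h2 => h x y h2 h1

lemma RS.sym {x y : X} (h : RS f ε x y) : RS f ε y x := fun k => by
  rw [dist_comm]; exact h k

lemma RS.tri {ε' : ℝ} {x y z : X} (h : RS f ε x y) (h' : RS f ε' y z) : RS f (ε + ε') x z :=
  fun k => (dist_triangle _ _ _).trans (add_le_add (h k) (h' k))

lemma RS.mono {ε' : ℝ} {x y : X} (h : RS f ε x y) (h' : ε ≤ ε') : RS f ε' x y :=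
  fun k => (h k).trans h'

lemma RS.refl' (h : 0 ≤ ε) (x : X) : RS f ε x x := fun k => by simpa using h

lemma RS.zero {x y : X} (h : RS f ε x y) : dist x y ≤ ε := h 0

lemma RS.shift {x y : X} (h : RS f ε x y) (k : ℕ) : RS f ε (f^[k] x) (f^[k] y) := fun j => by
  rw [← Function.iterate_add_apply, ← Function.iterate_add_apply]; exact h _

lemma RS_isClosed : IsClosed {p : X × X | RS f ε p.1 p.2} := by
  have : {p : X × X | RS f ε p.1 p.2}
      = ⋂ k : ℕ, {p : X × X | dist (f^[k] p.1) (f^[k] p.2) ≤ ε} := by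
    ext p; simp [RS]
  rw [this]
  refine isClosed_iInter fun k => isClosed_le ?_ continuous_const
  have := f.continuous.iterate k
  fun_prop

lemma RS_isClosed_right (x : X) : IsClosed {y : X | RS f ε x y} :=
  RS_isClosed.preimage (f := fun y => (x, y)) (by fun_prop)

lemma iterZ_nat (f : X ≃ₜ X) (k : ℕ) (x : X) : iterZ f (k : ℤ) x = f^[k] x := by
  simp only [iterZ, zpow_natCast]
  rw [← Equiv.Perm.iterate_eq_pow]; rfl

lemma iterZ_neg (f : X ≃ₜ X) (k : ℕ) (x : X) : iterZ f (-(k : ℤ)) x = f.symm^[k] x := by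
  simp only [iterZ, zpow_neg, zpow_natCast, ← inv_pow]
  rw [← Equiv.Perm.iterate_eq_pow]; rfl

lemma mem_WsLoc {x y : X} : y ∈ WsLoc f ε x ↔ RS f ε x y := by
  constructor
  · intro h k
    have := h k (by positivity)
    rwa [iterZ_nat, iterZ_nat] at this
  · intro h k hk
    obtain ⟨m, rfl⟩ := Int.eq_ofNat_of_zero_le hk
    rw [iterZ_nat, iterZ_nat]; exact h m

lemma mem_WuLoc {x y : X} : y ∈ WuLoc f ε x ↔ RS f.symm ε x y := by
  constructor
  · intro h k
    have := h (-(k : ℤ)) (by simp)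
    rwa [iterZ_neg, iterZ_neg] at this
  · intro h k hk
    obtain ⟨m, hm⟩ := Int.eq_ofNat_of_zero_le (neg_nonneg.2 hk)
    obtain rfl : k = -(m : ℤ) := by omega
    rw [iterZ_neg, iterZ_neg]; exact h m

lemma xp_of_isExpansive (h : IsExpansive f α) : Xp f α := by
  intro x y h1 h2
  by_contra hne
  obtain ⟨k, hk⟩ := h x y hne
  rcases le_total 0 k with h0 | h0
  · exact absurd ((mem_WsLoc.2 h1) k h0) (not_le.2 hk)
  · exact absurd ((mem_WuLoc.2 h2) k h0) (not_le.2 hk)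

lemma symm_iter_iter (f : X ≃ₜ X) (j : ℕ) (x : X) : f.symm^[j] (f^[j] x) = x :=
  (Function.LeftInverse.iterate f.symm_apply_apply j) x

lemma iter_symm_iter (f : X ≃ₜ X) (j : ℕ) (x : X) : f^[j] (f.symm^[j] x) = x :=
  (Function.LeftInverse.iterate f.apply_symm_apply j) x

lemma contraction [CompactSpace X] (hx : Xp f α) (hε : ε ≤ α) {η : ℝ} (hη : 0 < η) :
    ∃ N : ℕ, ∀ x y, RS f ε x y → ∀ k ≥ N, dist (f^[k] x) (f^[k] y) < η := by
  let K : ℕ → Set (X × X) := fun N => {p | η ≤ dist p.1 p.2} ∩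
    ({p | RS f ε p.1 p.2} ∩ {p | ∀ j ≤ N, dist (f.symm^[j] p.1) (f.symm^[j] p.2) ≤ ε})
  have hcl : ∀ N, IsClosed (K N) := by
    intro N
    refine (isClosed_le continuous_const (by fun_prop)).inter (RS_isClosed.inter ?_)
    have : {p : X × X | ∀ j ≤ N, dist (f.symm^[j] p.1) (f.symm^[j] p.2) ≤ ε} =
      ⋂ j : ℕ, ⋂ _ : j ≤ N, {p | dist (f.symm^[j] p.1) (f.symm^[j] p.2) ≤ ε} := by ext; simp
    rw [this]
    refine isClosed_iInter fun j => isClosed_iInter fun _ => isClosed_le ?_ continuous_const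
    have := f.symm.continuous.iterate j
    fun_prop
  have hE : ∃ N, K N = ∅ := by
    by_contra hcon
    push Not at hcon
    obtain ⟨⟨a, b⟩, hab⟩ := IsCompact.nonempty_iInter_of_sequence_nonempty_isCompact_isClosed K
      (fun i p hp => ⟨hp.1, hp.2.1, fun j hj => hp.2.2 j (by omega)⟩) hcon
      (hcl 0).isCompact hcl
    simp only [mem_iInter] at hab
    have h1 : RS f ε a b := (hab 0).2.1
    have h2 : RS f.symm ε a b := fun k => (hab k).2.2 k le_rfl
    have := hx a b (h1.mono hε) (h2.mono hε)
    have h3 : η ≤ dist a b := (hab 0).1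
    rw [this, dist_self] at h3
    linarith
  obtain ⟨N, hN⟩ := hE
  refine ⟨N, fun x y hxy k hk => ?_⟩
  by_contra hcon
  have : (f^[k] x, f^[k] y) ∈ K N := by
    refine ⟨not_lt.1 hcon, hxy.shift k, fun j hj => ?_⟩
    obtain ⟨i, rfl⟩ := Nat.exists_eq_add_of_le (hj.trans hk)
    rw [Function.iterate_add_apply, Function.iterate_add_apply]
    simp only [symm_iter_iter]
    exact hxy i
  rw [hN] at this; exact this

lemma unif_iter [CompactSpace X] (f : X ≃ₜ X) {η : ℝ} (hη : 0 < η) (N : ℕ) :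
    ∃ δ > 0, ∀ x y : X, dist x y < δ → ∀ k < N, dist (f^[k] x) (f^[k] y) < η := by
  induction N with
  | zero => exact ⟨1, one_pos, by simp⟩
  | succ N ih =>
    obtain ⟨δ, hδ, h⟩ := ih
    have := CompactSpace.uniformContinuous_of_continuous (f.continuous.iterate N)
    obtain ⟨δ', hδ', h'⟩ := Metric.uniformContinuous_iff.1 this η hη
    refine ⟨min δ δ', lt_min hδ hδ', fun x y hxy k hk => ?_⟩
    rcases Nat.lt_succ_iff_lt_or_eq.1 hk with h1 | rfl
    · exact h x y (hxy.trans_le (min_le_left _ _)) k h1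
    · exact h' (hxy.trans_le (min_le_right _ _))

lemma exists_delta [CompactSpace X] (hx : Xp f α) (hε : ε ≤ α) (h0 : 0 < ε) :
    ∃ δ > 0, ∀ x y, RS f ε x y → dist x y < δ → RS f (ε / 2) x y := by
  obtain ⟨N, hN⟩ := contraction hx hε (half_pos h0)
  obtain ⟨δ, hδ, h⟩ := unif_iter f (half_pos h0) N
  refine ⟨δ, hδ, fun x y hxy hd k => ?_⟩
  rcases lt_or_ge k N with hk | hk
  · exact (h x y hd k hk).le
  · exact (hN x y hxy k hk).le

lemma xp_unique (hx : Xp f α) (hε : 2 * ε ≤ α) {x y a b : X} (h1 : RS f ε x a) (h2 : RS f ε x b)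
    (h3 : RS f.symm ε y a) (h4 : RS f.symm ε y b) : a = b :=
  hx a b ((h1.sym.tri h2).mono (by linarith)) ((h3.sym.tri h4).mono (by linarith))

end part1

/-! ## Part 2: plaques of hyperbolic periodic points -/

section part2
open Topology Filter
variable {X : Type*} [MetricSpace X] {f : X ≃ₜ X} {α ε : ℝ}
variable {E₁ E₂ : Type*} [NormedAddCommGroup E₁] [NormedSpace ℝ E₁]
  [NormedAddCommGroup E₂] [NormedSpace ℝ E₂]

/-- the iterate as a homeomorphism -/
def iterHomeo {X : Type*} [MetricSpace X] (f : X ≃ₜ X) (K : ℕ) : X ≃ₜ X where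
  toFun := f^[K]
  invFun := f.symm^[K]
  left_inv := symm_iter_iter f K
  right_inv := iter_symm_iter f K
  continuous_toFun := f.continuous.iterate K
  continuous_invFun := f.symm.continuous.iterate K

/-- a linearizing chart at a periodic point -/
def HypChart {X : Type*} [MetricSpace X] {E₁ E₂ : Type*} [NormedAddCommGroup E₁] [NormedSpace ℝ E₁]
    [NormedAddCommGroup E₂] [NormedSpace ℝ E₂] (f : X ≃ₜ X) (l : ℕ) (q : X)
    (φ : OpenPartialHomeomorph X (E₁ × E₂)) : Prop :=
  1 ≤ l ∧ f^[l] q = q ∧ q ∈ φ.source ∧ φ q = 0 ∧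
    ∀ z ∈ φ.source, f^[l] z ∈ φ.source →
      φ (f^[l] z) = ((1 / 2 : ℝ) • (φ z).1, (2 : ℝ) • (φ z).2)

lemma HypChart.swap {l : ℕ} {q : X} {φ : OpenPartialHomeomorph X (E₁ × E₂)}
    (h : HypChart f l q φ) :
    HypChart f.symm l q (φ.trans (Homeomorph.prodComm E₁ E₂).toOpenPartialHomeomorph) := by
  obtain ⟨h1, h2, h3, h4, h5⟩ := h
  refine ⟨h1, ?_, by simpa using h3, by simp [h4], ?_⟩
  · conv_lhs => rw [← h2]
    exact symm_iter_iter f l q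
  · intro z hz hz'
    simp only [OpenPartialHomeomorph.trans_source, Homeomorph.toOpenPartialHomeomorph_source,
      preimage_univ, inter_univ] at hz hz'
    have := h5 _ hz' (by rwa [iter_symm_iter])
    rw [iter_symm_iter] at this
    simp [this, smul_smul]
    rfl

lemma per_iter {l : ℕ} {q : X} (h : f^[l] q = q) (j : ℕ) : f^[l * j] q = q := by
  rw [Function.iterate_mul]
  exact (Function.IsFixedPt.iterate h j)

lemma plaque [CompactSpace X] (hx : Xp f α) (hε : ε ≤ α) (h0 : 0 < ε) {l : ℕ} {q : X}
    {φ₀ : OpenPartialHomeomorph X (E₁ × E₂)} (h : HypChart f l q φ₀) :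
    ∃ (φ : OpenPartialHomeomorph X (E₁ × E₂)) (c₁ c₂ : ℝ), 0 < c₁ ∧ 0 < c₂ ∧
      q ∈ φ.source ∧ φ q = 0 ∧ (∀ y, RS f ε q y → y ∈ φ.source ∧ (φ y).2 = 0) ∧
      (∀ y, RS f ε q y → RS f (ε / 2) q y → ∀ᶠ v in 𝓝 (φ y).1, (v, (0 : E₂)) ∈ φ.target ∧
        RS f ε q (φ.symm (v, 0))) ∧
      (∀ᶠ y in 𝓝 q, φ y = (c₁ • (φ₀ y).1, c₂ • (φ₀ y).2)) := by
  obtain ⟨hl, hq, hqs, hq0, hL⟩ := h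
  have hsymm0 : φ₀.symm 0 = q := by rw [← hq0]; exact φ₀.left_inv hqs
  have h0t : (0 : E₁ × E₂) ∈ φ₀.target := by rw [← hq0]; exact φ₀.map_source hqs
  have hcs : ContinuousAt φ₀.symm 0 := φ₀.symm.continuousAt h0t
  have hcs' : Tendsto φ₀.symm (𝓝 0) (𝓝 q) := by
    have := hcs.tendsto; rwa [hsymm0] at this
  have ev : ∀ᶠ v in 𝓝 (0 : E₁ × E₂), v ∈ φ₀.target ∧ f^[l] (φ₀.symm v) ∈ φ₀.source ∧
      ∀ i ∈ Finset.range l, dist (f^[i] q) (f^[i] (φ₀.symm v)) ≤ ε := by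
    refine Eventually.and (φ₀.open_target.mem_nhds h0t) (Eventually.and ?_ ?_)
    · have : Tendsto (fun v => f^[l] (φ₀.symm v)) (𝓝 0) (𝓝 (f^[l] q)) :=
        ((f.continuous.iterate l).tendsto q).comp hcs'
      rw [hq] at this
      exact this.eventually (φ₀.open_source.mem_nhds hqs)
    · rw [Filter.eventually_all_finset]
      intro i _
      have : Tendsto (fun v => dist (f^[i] q) (f^[i] (φ₀.symm v))) (𝓝 0)
          (𝓝 (dist (f^[i] q) (f^[i] q))) :=
        tendsto_const_nhds.dist (((f.continuous.iterate i).tendsto q).comp hcs')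
      rw [dist_self] at this
      exact (this.eventually (gt_mem_nhds h0)).mono fun _ h => le_of_lt h
  obtain ⟨r, hr, hrb⟩ := Metric.eventually_nhds_iff.1 ev
  simp only [dist_zero_right] at hrb
  -- dynamics on the stable plane
  have nrm : ∀ v : E₁, ‖v‖ < r → ‖((v, 0) : E₁ × E₂)‖ < r := fun v hv => by
    simpa [Prod.norm_def, hr] using hv
  have st1 : ∀ v : E₁, ‖v‖ < r →
      f^[l] (φ₀.symm (v, 0)) = φ₀.symm ((1 / 2 : ℝ) • v, (0 : E₂)) := by
    intro v hv
    obtain ⟨a, b, -⟩ := hrb (nrm v hv)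
    have := hL _ (φ₀.map_target a) b
    rw [φ₀.right_inv a] at this
    rw [← φ₀.left_inv b, this]; simp
  have nrm2 : ∀ (j : ℕ) (v : E₁), ‖v‖ < r → ‖((1 / 2 : ℝ) ^ j) • v‖ < r := by
    intro j v hv
    rw [norm_smul]
    have : ‖((1 / 2 : ℝ) ^ j)‖ ≤ 1 := by
      rw [norm_pow]; exact pow_le_one₀ (by positivity) (by norm_num)
    nlinarith [norm_nonneg v]
  have stj : ∀ (j : ℕ) (v : E₁), ‖v‖ < r →
      f^[l * j] (φ₀.symm (v, 0)) = φ₀.symm (((1 / 2 : ℝ) ^ j) • v, (0 : E₂)) := by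
    intro j
    induction j with
    | zero => intro v hv; simp
    | succ j ih =>
      intro v hv
      rw [Nat.mul_succ, Nat.add_comm, Function.iterate_add_apply, ih v hv, st1 _ (nrm2 j v hv),
        smul_smul, pow_succ']
  have stRS : ∀ v : E₁, ‖v‖ < r → RS f ε q (φ₀.symm (v, 0)) := by
    intro v hv k
    have hk : k = k % l + l * (k / l) := (Nat.mod_add_div k l).symm
    rw [hk, Function.iterate_add_apply, Function.iterate_add_apply, per_iter hq, stj _ v hv]
    exact (hrb (nrm _ (nrm2 _ v hv))).2.2 _ (Finset.mem_range.2 (Nat.mod_lt _ hl))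
  -- entrance time
  have evq : ∀ᶠ y in 𝓝 q, y ∈ φ₀.source ∧ ‖φ₀ y‖ < r := by
    refine Eventually.and (φ₀.open_source.mem_nhds hqs) ?_
    have : Tendsto (fun y => ‖φ₀ y‖) (𝓝 q) (𝓝 ‖φ₀ q‖) := (φ₀.continuousAt hqs).norm
    rw [hq0, norm_zero] at this
    exact this.eventually (gt_mem_nhds hr)
  obtain ⟨η, hη, hηb⟩ := Metric.eventually_nhds_iff.1 evq
  obtain ⟨N, hN⟩ := contraction hx hε hη
  have hNK : N ≤ l * N := Nat.le_mul_of_pos_left _ hl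
  have ent : ∀ y, RS f ε q y → ∀ j, f^[l * (N + j)] y ∈ φ₀.source ∧
      ‖φ₀ (f^[l * (N + j)] y)‖ < r := by
    intro y hy j
    apply hηb
    have := hN q y hy (l * (N + j)) (by rw [Nat.mul_add]; omega)
    rwa [per_iter hq, dist_comm] at this
  have grow : ∀ y, RS f ε q y → ∀ j, (φ₀ (f^[l * (N + j)] y)).2 =
      ((2 : ℝ) ^ j) • (φ₀ (f^[l * N] y)).2 := by
    intro y hy j
    induction j with
    | zero => simp
    | succ j ih =>
      have e1 := ent y hy j
      have e2 := ent y hy (j + 1)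
      have e3 : l * (N + (j + 1)) = l + l * (N + j) := by ring
      rw [e3, Function.iterate_add_apply] at e2 ⊢
      rw [hL _ e1.1 e2.1]
      simp only [ih, smul_smul, pow_succ']
  have zero2 : ∀ y, RS f ε q y → (φ₀ (f^[l * N] y)).2 = 0 := by
    intro y hy
    by_contra hne
    have hpos : 0 < ‖(φ₀ (f^[l * N] y)).2‖ := norm_pos_iff.2 hne
    obtain ⟨j, hj⟩ := pow_unbounded_of_one_lt (r / ‖(φ₀ (f^[l * N] y)).2‖) (one_lt_two (α := ℝ))
    have e1 := (ent y hy j).2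
    have e2 := grow y hy j
    have e3 : ‖(φ₀ (f^[l * (N + j)] y)).2‖ < r := (norm_snd_le _).trans_lt e1
    rw [e2, norm_smul, norm_pow, Real.norm_ofNat] at e3
    rw [div_lt_iff₀ hpos] at hj
    linarith
  have near : ∀ N : ℕ, ∀ᶠ y in 𝓝 q, f^[l * N] y ∈ φ₀.source ∧
      φ₀ (f^[l * N] y) = (((1 / 2 : ℝ) ^ N) • (φ₀ y).1, ((2 : ℝ) ^ N) • (φ₀ y).2) := by
    intro N
    induction N with
    | zero =>
      filter_upwards [φ₀.open_source.mem_nhds hqs] with y hy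
      simpa using hy
    | succ N ih =>
      have : Tendsto (fun y => f^[l * (N + 1)] y) (𝓝 q) (𝓝 (f^[l * (N + 1)] q)) :=
        (f.continuous.iterate _).tendsto q
      rw [per_iter hq] at this
      filter_upwards [ih, this.eventually (φ₀.open_source.mem_nhds hqs)] with y hy hy2
      have hy2' : f^[l * (N + 1)] y ∈ φ₀.source := hy2
      refine ⟨hy2', ?_⟩
      have e3 : l * (N + 1) = l + l * N := by ring
      rw [e3, Function.iterate_add_apply] at hy2' ⊢
      rw [hL _ hy.1 hy2', hy.2]
      simp only [smul_smul, pow_succ']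
  let φ : OpenPartialHomeomorph X (E₁ × E₂) :=
    (iterHomeo f (l * N)).toOpenPartialHomeomorph.trans φ₀
  have φs : ∀ y, y ∈ φ.source ↔ f^[l * N] y ∈ φ₀.source := fun y => by
    simp [φ, iterHomeo]
  have φa : ∀ y, φ y = φ₀ (f^[l * N] y) := fun y => rfl
  have φt : ∀ v, v ∈ φ.target ↔ v ∈ φ₀.target := fun v => by simp [φ]
  have φy : ∀ v, φ.symm v = f.symm^[l * N] (φ₀.symm v) := fun v => rfl
  refine ⟨φ, (1 / 2 : ℝ) ^ N, 2 ^ N, by positivity, by positivity, ?_, ?_, ?_, ?_, ?_⟩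
  · rw [φs, per_iter hq]; exact hqs
  · rw [φa, per_iter hq]; exact hq0
  · intro y hy
    exact ⟨(φs y).2 (ent y hy 0).1, by rw [φa]; exact zero2 y hy⟩
  · intro y hy hy2
    have hys : y ∈ φ.source := (φs y).2 (ent y hy 0).1
    have hvt : φ y ∈ φ.target := φ.map_source hys
    have hv0 : φ y = ((φ y).1, 0) := Prod.ext rfl (by rw [φa]; exact zero2 y hy)
    have hnv : ‖(φ y).1‖ < r := (norm_fst_le _).trans_lt (ent y hy 0).2
    have hcv : ContinuousAt (fun v : E₁ => φ.symm (v, 0)) (φ y).1 := by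
      have : ContinuousAt φ.symm ((φ y).1, 0) := by
        rw [← hv0]; exact φ.symm.continuousAt hvt
      exact ContinuousAt.comp (f := fun v : E₁ => (v, (0 : E₂))) this (by fun_prop)
    have hval : φ.symm ((φ y).1, 0) = y := by rw [← hv0]; exact φ.left_inv hys
    have e1 : ∀ᶠ v : E₁ in 𝓝 (φ y).1, ‖v‖ < r :=
      (continuous_norm.tendsto _).eventually (gt_mem_nhds hnv)
    have e2 : ∀ᶠ v : E₁ in 𝓝 (φ y).1, ∀ k ∈ Finset.range (l * N),
        dist (f^[k] q) (f^[k] (φ.symm (v, 0))) ≤ ε := by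
      rw [Filter.eventually_all_finset]
      intro k _
      have : Tendsto (fun v : E₁ => dist (f^[k] q) (f^[k] (φ.symm (v, 0)))) (𝓝 (φ y).1)
          (𝓝 (dist (f^[k] q) (f^[k] y))) := by
        refine tendsto_const_nhds.dist (((f.continuous.iterate k).tendsto y).comp ?_)
        have := hcv.tendsto
        rwa [hval] at this
      exact (this.eventually (gt_mem_nhds (lt_of_le_of_lt (hy2 k) (by linarith)))).mono
        fun _ h => le_of_lt h
    filter_upwards [e1, e2] with v hv1 hv2
    refine ⟨(φt _).2 (hrb (nrm v hv1)).1, fun k => ?_⟩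
    rcases lt_or_ge k (l * N) with hk | hk
    · exact hv2 k (Finset.mem_range.2 hk)
    · obtain ⟨i, rfl⟩ := Nat.exists_eq_add_of_le' hk
      rw [Function.iterate_add_apply, Function.iterate_add_apply, per_iter hq, φy, iter_symm_iter]
      exact stRS v hv1 i
  · filter_upwards [near N] with y hy
    rw [φa]; exact hy.2

end part2

/-! ## Part 3: separation -/

section part3
open Topology Filter
variable {X : Type*} [MetricSpace X]

lemma eq_of_int_diff {a b : ℝ} (h : ((a : ℝ) : AddCircle (1 : ℝ)) = (b : AddCircle (1 : ℝ)))
    (h1 : |a - b| < 1) : a = b := by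
  have : ((a - b : ℝ) : AddCircle (1 : ℝ)) = 0 := by
    rw [AddCircle.coe_sub, h, sub_self]
  rw [AddCircle.coe_eq_zero_iff] at this
  obtain ⟨n, hn⟩ := this
  simp only [zsmul_eq_mul, mul_one] at hn
  rw [← hn] at h1
  have h2 : |n| < 1 := by exact_mod_cast h1
  have : n = 0 := Int.abs_lt_one_iff.1 h2
  rw [this] at hn
  simp at hn; linarith

lemma separation {B C N P Q : Set X} (hB : IsOpen B) [SimplyConnectedSpace B]
    [LocallyPathConnectedSpace B] (hC : IsPreconnected C) (hCN : C ⊆ N)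
    (hCcl : ∀ z ∈ B, z ∈ closure C → z ∈ C) (hN : IsOpen N) (hNB : N ⊆ B) (hNne : Nᶜ.Nonempty)
    (hP : IsOpen P) (hQ : IsOpen Q) (hPQ : Disjoint P Q) (hPQN : N \ C = P ∪ Q)
    {q : X} (hq : q ∈ C) :
    ∃ S₁ S₂ : Set X, IsOpen S₁ ∧ IsOpen S₂ ∧ Disjoint S₁ S₂ ∧ S₁ ∪ S₂ = B \ C ∧
      ∀ᶠ y in 𝓝 q, (y ∈ P → y ∈ S₁) ∧ (y ∈ Q → y ∈ S₂) := by
  classical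
  have hPC : Disjoint P C := by
    rw [Set.disjoint_left]; intro a ha
    exact (hPQN.ge (Or.inl ha)).2
  have hQC : Disjoint Q C := by
    rw [Set.disjoint_left]; intro a ha
    exact (hPQN.ge (Or.inr ha)).2
  have hPN : P ⊆ N := fun a ha => (hPQN.ge (Or.inl ha)).1
  have hQN : Q ⊆ N := fun a ha => (hPQN.ge (Or.inr ha)).1
  let dN : X → ℝ := fun z => infDist z Nᶜ
  let dC : X → ℝ := fun z => infDist z C
  have hdN0 : ∀ z, 0 ≤ dN z := fun z => infDist_nonneg
  have hdC0 : ∀ z, 0 ≤ dC z := fun z => infDist_nonneg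
  have hdN : ∀ z ∈ N, 0 < dN z := fun z hz =>
    (hN.isClosed_compl.notMem_iff_infDist_pos hNne).1 (by simpa using hz)
  have hdN' : ∀ z, z ∉ N → dN z = 0 := fun z hz => infDist_zero_of_mem hz
  have hdC : ∀ z ∈ B, z ∉ C → 0 < dC z := by
    intro z hz hzC
    have : z ∉ closure C := fun h => hzC (hCcl z hz h)
    exact (infDist_pos_iff_notMem_closure ⟨q, hq⟩).1 this
  have hdC' : ∀ z ∈ C, dC z = 0 := fun z hz => infDist_zero_of_mem hz
  have hden : ∀ z ∈ B, 0 < dN z + dC z := by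
    intro z hz
    by_cases h : z ∈ C
    · have := hdN z (hCN h); have := hdC0 z; linarith
    · have := hdC z hz h; have := hdN0 z; linarith
  let g : X → ℝ := fun z => dN z / (dN z + dC z)
  have g_cont : ∀ z ∈ B, ContinuousAt g z := by
    intro z hz
    have h1 : Continuous dN := continuous_infDist_pt _
    have h2 : Continuous dC := continuous_infDist_pt _
    exact h1.continuousAt.div (h1.add h2).continuousAt (hden z hz).ne'
  have g_nonneg : ∀ z, 0 ≤ g z := fun z => div_nonneg (hdN0 z) (add_nonneg (hdN0 z) (hdC0 z))
  have g_C : ∀ z ∈ C, g z = 1 := by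
    intro z hz
    have := hdN z (hCN hz)
    simp only [g, hdC' z hz, add_zero]; exact div_self this.ne'
  have g_lt : ∀ z ∈ B, z ∉ C → g z < 1 := by
    intro z hz hzC
    simp only [g]
    rw [div_lt_one (hden z hz)]
    have := hdC z hz hzC; linarith
  have g_N : ∀ z, z ∉ N → g z = 0 := fun z hz => by simp [g, hdN' z hz]
  let ψ : X → ℝ := fun z => if z ∈ Q then - (g z / 2) else g z / 2
  have ψ_abs : ∀ z, |ψ z| = g z / 2 := by
    intro z
    have := g_nonneg z
    simp only [ψ]; split_ifs
    · rw [abs_neg, abs_of_nonneg (by positivity)]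
    · rw [abs_of_nonneg (by positivity)]
  let Φ : X → AddCircle (1 : ℝ) := fun z => (ψ z : AddCircle (1 : ℝ))
  have half : ((-(1 / 2 : ℝ) : ℝ) : AddCircle (1 : ℝ)) = ((1 / 2 : ℝ) : AddCircle (1 : ℝ)) := by
    have : ((1 / 2 : ℝ) : ℝ) = -(1 / 2) + 1 := by norm_num
    conv_rhs => rw [this]
    rw [AddCircle.coe_add, AddCircle.coe_period, add_zero]
  have Φ_cont : ∀ z ∈ B, ContinuousAt Φ z := by
    intro z hz
    have hco : Continuous ((↑) : ℝ → AddCircle (1 : ℝ)) := AddCircle.continuous_mk' 1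
    by_cases hzN : z ∈ N
    · by_cases hzC : z ∈ C
      · -- both branches tend to 1/2
        have t1 : Tendsto (fun y => ((g y / 2 : ℝ) : AddCircle (1 : ℝ))) (𝓝 z)
            (𝓝 ((1 / 2 : ℝ) : AddCircle (1 : ℝ))) := by
          refine (hco.tendsto _).comp ?_
          have := (g_cont z hz).tendsto.div_const 2
          rwa [g_C z hzC] at this
        have t2 : Tendsto (fun y => ((-(g y / 2) : ℝ) : AddCircle (1 : ℝ))) (𝓝 z)
            (𝓝 ((1 / 2 : ℝ) : AddCircle (1 : ℝ))) := by
          rw [← half]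
          refine (hco.tendsto _).comp ?_
          have := ((g_cont z hz).tendsto.div_const 2).neg
          rwa [g_C z hzC] at this
        have hval : Φ z = ((1 / 2 : ℝ) : AddCircle (1 : ℝ)) := by
          have : z ∉ Q := fun h => hQC.le_bot ⟨h, hzC⟩
          simp only [Φ, ψ, this, if_false, g_C z hzC]
        rw [ContinuousAt, hval]
        intro W hW
        refine Filter.mem_map.2 ?_
        filter_upwards [t1 hW, t2 hW] with y h1 h2
        simp only [mem_preimage, Φ, ψ] at *
        split_ifs
        · exact h2
        · exact h1
      · rcases hPQN.le ⟨hzN, hzC⟩ with h | h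
        · have : Φ =ᶠ[𝓝 z] fun y => ((g y / 2 : ℝ) : AddCircle (1 : ℝ)) := by
            filter_upwards [hP.mem_nhds h] with y hy
            have : y ∉ Q := fun h' => hPQ.le_bot ⟨hy, h'⟩
            simp only [Φ, ψ, this, if_false]
          refine ContinuousAt.congr ?_ this.symm
          exact hco.continuousAt.comp ((g_cont z hz).div_const 2)
        · have : Φ =ᶠ[𝓝 z] fun y => ((-(g y / 2) : ℝ) : AddCircle (1 : ℝ)) := by
            filter_upwards [hQ.mem_nhds h] with y hy
            simp only [Φ, ψ, hy, if_true]
          refine ContinuousAt.congr ?_ this.symm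
          exact hco.continuousAt.comp ((g_cont z hz).div_const 2).neg
    · refine hco.continuousAt.comp ?_
      have h0 : ψ z = 0 := by
        have := ψ_abs z
        rw [g_N z hzN] at this; simpa using this
      rw [ContinuousAt, h0]
      refine squeeze_zero_norm (fun y => (ψ_abs y).le) ?_
      have := (g_cont z hz).tendsto.div_const 2
      rwa [g_N z hzN, zero_div] at this
  have hqB : q ∈ B := hNB (hCN hq)
  have hψq : ∀ z ∈ C, ψ z = 1 / 2 := by
    intro z hzC
    have : z ∉ Q := fun h => hQC.le_bot ⟨h, hzC⟩
    simp only [ψ, this, if_false, g_C z hzC]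
  let ΦB : C(B, AddCircle (1 : ℝ)) := ⟨fun z => Φ z, continuous_iff_continuousAt.2 fun z =>
    ContinuousAt.comp (f := fun z : B => (z : X)) (Φ_cont z z.2) continuous_subtype_val.continuousAt⟩
  obtain ⟨F, ⟨hFq, hF⟩, -⟩ := (AddCircle.isCoveringMap_coe (1 : ℝ)).existsUnique_continuousMap_lifts
    ΦB ⟨q, hqB⟩ (1 / 2 : ℝ) (by
      change _ = Φ q
      simp only [Φ, hψq q hq])
  have hFv : ∀ z : B, ((F z : ℝ) : AddCircle (1 : ℝ)) = ((ψ z : ℝ) : AddCircle (1 : ℝ)) :=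
    fun z => congrFun hF z
  -- constant on C
  have hFC : ∀ z : B, (z : X) ∈ C → F z = 1 / 2 := by
    have hpre : IsPreconnected ((↑) ⁻¹' C : Set B) := by
      refine hC.preimage_of_isOpenMap Subtype.val_injective hB.isOpenMap_subtype_val ?_
      rw [Subtype.range_coe]; exact hCN.trans hNB
    have himg : IsPreconnected (F '' ((↑) ⁻¹' C : Set B)) := hpre.image _ F.continuous.continuousOn
    intro z hz
    by_contra hne
    have h1 : (1 / 2 : ℝ) ∈ F '' ((↑) ⁻¹' C : Set B) := ⟨⟨q, hqB⟩, hq, hFq⟩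
    have h2 : F z ∈ F '' ((↑) ⁻¹' C : Set B) := ⟨z, hz, rfl⟩
    have key : ∀ t ∈ F '' ((↑) ⁻¹' C : Set B), |t - 1 / 2| < 1 → t = 1 / 2 := by
      rintro _ ⟨w, hw, rfl⟩ hlt
      exact eq_of_int_diff (by rw [hFv, hψq _ hw]) hlt
    have hoc := himg.ordConnected
    rcases lt_or_gt_of_ne hne with h | h
    · have : max (F z) (1 / 4) ∈ F '' ((↑) ⁻¹' C : Set B) :=
        hoc.out h2 h1 ⟨le_max_left _ _, max_le h.le (by norm_num)⟩
      have h3 := key _ this (by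
        rw [abs_lt]; constructor
        · linarith [le_max_right (F z) (1 / 4 : ℝ)]
        · linarith [max_le h.le (by norm_num : (1 / 4 : ℝ) ≤ 1 / 2)])
      rcases max_choice (F z) (1 / 4 : ℝ) with h4 | h4 <;> rw [h4] at h3 <;> linarith
    · have : min (F z) (3 / 4) ∈ F '' ((↑) ⁻¹' C : Set B) :=
        hoc.out h1 h2 ⟨le_min h.le (by norm_num), min_le_left _ _⟩
      have h3 := key _ this (by
        rw [abs_lt]; constructor
        · linarith [le_min h.le (by norm_num : (1 / 2 : ℝ) ≤ 3 / 4)]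
        · linarith [min_le_right (F z) (3 / 4 : ℝ)])
      rcases min_choice (F z) (3 / 4 : ℝ) with h4 | h4 <;> rw [h4] at h3 <;> linarith
  have hFnC : ∀ z : B, F z = 1 / 2 → (z : X) ∈ C := by
    intro z hz
    by_contra hzC
    have h1 := g_lt z z.2 hzC
    have h2 := ψ_abs z
    have h3 := abs_le.1 h2.le
    have := eq_of_int_diff (a := ψ z) (b := 1 / 2) (by rw [← hFv, hz])
      (by rw [abs_lt]; constructor <;> linarith [h3.1, h3.2])
    linarith [h3.2]
  refine ⟨(↑) '' {z : B | F z < 1 / 2}, (↑) '' {z : B | 1 / 2 < F z}, ?_, ?_, ?_, ?_, ?_⟩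
  · exact hB.isOpenMap_subtype_val _ (isOpen_lt F.continuous continuous_const)
  · exact hB.isOpenMap_subtype_val _ (isOpen_lt continuous_const F.continuous)
  · rw [Set.disjoint_left]
    rintro _ ⟨a, ha, rfl⟩ ⟨b, hb, hab⟩
    obtain rfl := Subtype.ext hab
    simp only [mem_ofPred_eq] at ha hb
    linarith
  · ext y; constructor
    · rintro (⟨a, ha, rfl⟩ | ⟨a, ha, rfl⟩)
      · refine ⟨a.2, fun h => ?_⟩
        have := hFC a h; simp only [mem_ofPred_eq] at ha; linarith
      · refine ⟨a.2, fun h => ?_⟩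
        have := hFC a h; simp only [mem_ofPred_eq] at ha; linarith
    · rintro ⟨hyB, hyC⟩
      have hne : F ⟨y, hyB⟩ ≠ 1 / 2 := fun h => hyC (hFnC _ h)
      rcases lt_or_gt_of_ne hne with h | h
      · exact Or.inl ⟨⟨y, hyB⟩, h, rfl⟩
      · exact Or.inr ⟨⟨y, hyB⟩, h, rfl⟩
  · have e1 : ∀ᶠ y : B in 𝓝 (⟨q, hqB⟩ : B), |F y - 1 / 2| < 1 / 4 := by
      have := F.continuous.tendsto ⟨q, hqB⟩
      rw [hFq] at this
      have := Metric.tendsto_nhds.1 this (1 / 4) (by norm_num)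
      simpa [Real.dist_eq] using this
    have e2 : ∀ᶠ y in 𝓝 q, ∃ h : y ∈ B, |F ⟨y, h⟩ - 1 / 2| < 1 / 4 := by
      rw [nhds_subtype_eq_comap, eventually_comap] at e1
      filter_upwards [e1, hB.mem_nhds hqB] with y h1 h2
      exact ⟨h2, h1 _ rfl⟩
    have e3 : ∀ᶠ y in 𝓝 q, 1 / 2 < g y := by
      have := (g_cont q hqB).tendsto
      rw [g_C q hq] at this
      exact this.eventually (lt_mem_nhds (by norm_num))
    filter_upwards [e2, e3] with y ⟨hyB, h2⟩ h3
    have h2' := abs_lt.1 h2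
    constructor
    · intro hy
      have hyC : y ∉ C := fun h => hPC.le_bot ⟨hy, h⟩
      have hyQ : y ∉ Q := fun h => hPQ.le_bot ⟨hy, h⟩
      have h4 := g_lt y hyB hyC
      have h5 : ψ y = g y / 2 := by simp only [ψ, hyQ, if_false]
      refine ⟨⟨y, hyB⟩, ?_, rfl⟩
      have : F ⟨y, hyB⟩ = g y / 2 := eq_of_int_diff (by rw [hFv, h5])
        (by rw [abs_lt]; constructor <;> linarith)
      simp only [mem_ofPred_eq, this]; linarith
    · intro hy
      have hyC : y ∉ C := fun h => hQC.le_bot ⟨hy, h⟩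
      have h4 := g_lt y hyB hyC
      have h5 : ψ y = - (g y / 2) := by simp only [ψ, hy, if_true]
      refine ⟨⟨y, hyB⟩, ?_, rfl⟩
      have : F ⟨y, hyB⟩ = 1 - g y / 2 := eq_of_int_diff (by
          rw [hFv, h5, sub_eq_neg_add, AddCircle.coe_add, AddCircle.coe_period, add_zero])
        (by rw [abs_lt]; constructor <;> linarith)
      simp only [mem_ofPred_eq, this]; linarith

lemma side_connected {B C S₁ S₂ : Set X} (hB : IsPreconnected B)
    (hC : IsPreconnected C) (hCne : C.Nonempty) (hCB : C ⊆ B) (h1 : IsOpen S₁) (h2 : IsOpen S₂)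
    (h12 : Disjoint S₁ S₂) (hU : S₁ ∪ S₂ = B \ C) : IsPreconnected (S₁ ∪ C) := by
  rw [isPreconnected_iff_subset_of_disjoint]
  intro u v hu hv hcov hdis
  have main : ∀ u v : Set X, IsOpen u → IsOpen v → S₁ ∪ C ⊆ u ∪ v → (S₁ ∪ C) ∩ (u ∩ v) = ∅ →
      C ⊆ u → S₁ ∪ C ⊆ u := by
    intro u v hu hv hcov hdis hCu
    by_contra hcon
    rw [Set.not_subset] at hcon
    obtain ⟨y, hy, hyu⟩ := hcon
    have hyS : y ∈ S₁ := by
      rcases hy with h | h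
      · exact h
      · exact absurd (hCu h) hyu
    have hyv : y ∈ v := (hcov hy).resolve_left hyu
    have hyB : y ∈ B := (hU.le (Or.inl hyS)).1
    obtain ⟨c, hc⟩ := hCne
    obtain ⟨w, hwB, hw1, hw2⟩ := hB (S₁ ∩ v) (S₂ ∪ u) (h1.inter hv) (h2.union hu) (by
      intro w hw
      by_cases hwC : w ∈ C
      · exact Or.inr (Or.inr (hCu hwC))
      · rcases hU.ge ⟨hw, hwC⟩ with h | h
        · rcases hcov (Or.inl h) with h' | h'
          · exact Or.inr (Or.inr h')
          · exact Or.inl ⟨h, h'⟩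
        · exact Or.inr (Or.inl h)) ⟨y, hyB, hyS, hyv⟩ ⟨c, hCB hc, Or.inr (hCu hc)⟩
    rcases hw2 with h | h
    · exact h12.le_bot ⟨hw1.1, h⟩
    · exact (hdis.le ⟨Or.inl hw1.1, h, hw1.2⟩ : w ∈ (∅ : Set X))
  rcases (isPreconnected_iff_subset_of_disjoint.1 hC) u v hu hv
    (subset_union_right.trans hcov) (subset_eq_empty
      (inter_subset_inter_left _ subset_union_right) hdis) with h | h
  · exact Or.inl (main u v hu hv hcov hdis h)
  · exact Or.inr (main v u hv hu (by rwa [union_comm v u]) (by rwa [inter_comm v u]) h)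
end part3

/-! ## Part 4: charts at hyperbolic periodic points -/

section part4
open Topology Filter
variable {X : Type*} [MetricSpace X]

lemma exists_fun_homeo {k : ℕ} (hk : k = 1) : ∃ g : (Fin k → ℝ) ≃ₜ ℝ, g 0 = 0 ∧
    ∀ b : Fin k → ℝ, g (fun i => 2 * b i) = 2 * g b := by
  subst hk
  exact ⟨Homeomorph.funUnique (Fin 1) ℝ, by simp, by simp⟩

lemma chart_of_perHr {m : ℕ} {f : X ≃ₜ X} {q : X} (hq : q ∈ PerHr f (m + 1) (m + 1 - 1)) :
    ∃ (l : ℕ) (φ : OpenPartialHomeomorph X ((Fin m → ℝ) × ℝ)), HypChart f l q φ := by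
  obtain ⟨l, hl, hfl, U, V, h, hU, hV, h0, hp, hp0, hconj⟩ := hq
  obtain ⟨g, g0, g2⟩ := exists_fun_homeo (k := m + 1 - (m + 1 - 1)) (by omega)
  have hiter : ∀ z, (f.toEquiv ^ l) z = f^[l] z := fun z => by
    rw [← Equiv.Perm.iterate_eq_pow]; rfl
  simp only [hiter] at hfl hconj
  have e1 : IsOpenEmbedding ((↑) : U → X) := hU.isOpenEmbedding_subtypeVal
  have e2 : IsOpenEmbedding (fun u : U => ((h u : V) : ModelSp (m + 1) (m + 1 - 1))) :=
    hV.isOpenEmbedding_subtypeVal.comp h.isOpenEmbedding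
  have : Nonempty U := ⟨⟨q, hp⟩⟩
  let ψ : OpenPartialHomeomorph X (ModelSp (m + 1) (m + 1 - 1)) :=
    (e1.toOpenPartialHomeomorph _).symm.trans (e2.toOpenPartialHomeomorph _)
  have hs : ψ.source = U := by
    simp [ψ]
  have hval : ∀ (z : X) (hz : z ∈ U), ψ z = (h ⟨z, hz⟩ : V) := by
    intro z hz
    have : (e1.toOpenPartialHomeomorph _).symm z = (⟨z, hz⟩ : U) := by
      have := (e1.toOpenPartialHomeomorph ((↑) : U → X)).left_inv (x := ⟨z, hz⟩) (by simp)
      simpa using this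
    simp [ψ, this]
  let T : ModelSp (m + 1) (m + 1 - 1) ≃ₜ (Fin m → ℝ) × ℝ :=
    Homeomorph.prodCongr (Homeomorph.refl (Fin m → ℝ)) g
  have hT : ∀ a, T a = (a.1, g a.2) := fun a => rfl
  refine ⟨l, ψ.trans T.toOpenPartialHomeomorph, hl, hfl, by simp [hs, hp], ?_, ?_⟩
  · simp [hval q hp, hp0, hT, g0]
  · intro z hz hz'
    simp only [OpenPartialHomeomorph.trans_source, Homeomorph.toOpenPartialHomeomorph_source,
      preimage_univ, inter_univ, hs] at hz hz'
    have := hconj z hz hz'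
    simp only [OpenPartialHomeomorph.coe_trans, Function.comp, 
      Homeomorph.toOpenPartialHomeomorph_apply, hval _ hz, hval _ hz', this, hT, modelL]
    refine Prod.ext ?_ ?_
    · ext i
      simp [div_eq_inv_mul]
    · exact g2 _
end part4

/-! ## Part 5: local separation by stable discs -/

section part5
open Topology Filter
variable {X : Type*} [MetricSpace X] {f : X ≃ₜ X} {α ε δ : ℝ}
variable {E : Type*} [NormedAddCommGroup E] [NormedSpace ℝ E]

lemma branch [CompactSpace X] {q : X} {φ : OpenPartialHomeomorph X (ℝ × E)}
    (h0 : 0 ≤ ε) (hδ : 0 < δ) (hδs : ∀ x y, RS f ε x y → dist x y < δ → RS f (ε / 2) x y)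
    (h1 : q ∈ φ.source) (h2 : φ q = 0) (h3 : ∀ y, RS f ε q y → y ∈ φ.source ∧ (φ y).2 = 0)
    (h4 : ∀ y, RS f ε q y → RS f (ε / 2) q y → ∀ᶠ v in 𝓝 (φ y).1, (v, (0 : E)) ∈ φ.target ∧
        RS f ε q (φ.symm (v, 0))) (σ : ℝ) (hσ : σ ≠ 0) :
    ∃ t > 0, (∀ s ∈ Icc 0 t, (σ * s, (0 : E)) ∈ φ.target ∧ RS f ε q (φ.symm (σ * s, 0))) ∧
      δ ≤ dist q (φ.symm (σ * t, 0)) := by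
  let K : Set X := {y | RS f ε q y}
  have hK : IsCompact K := (RS_isClosed_right q).isCompact
  have hφK : IsCompact (φ '' K) := hK.image_of_continuousOn
    (φ.continuousOn.mono fun y hy => (h3 y hy).1)
  let G : Set ℝ := {s | (σ * s, (0 : E)) ∈ φ '' K}
  have hGc : IsClosed G := hφK.isClosed.preimage (by fun_prop : Continuous fun s : ℝ => (σ * s, (0 : E)))
  have hG : ∀ s, s ∈ G ↔ (σ * s, (0 : E)) ∈ φ.target ∧ RS f ε q (φ.symm (σ * s, 0)) := by
    intro s; constructor
    · rintro ⟨y, hy, hys⟩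
      have hys' := (h3 y hy).1
      rw [← hys]
      refine ⟨φ.map_source hys', ?_⟩
      rw [φ.left_inv hys']; exact hy
    · rintro ⟨ha, hb⟩
      exact ⟨_, hb, φ.right_inv ha⟩
  have hsymm0 : φ.symm 0 = q := by rw [← h2]; exact φ.left_inv h1
  have h00 : (0 : ℝ) ∈ G := ⟨q, RS.refl' h0 q, by rw [h2, mul_zero]; rfl⟩
  let G' : Set ℝ := {s | ∀ u ∈ Icc (0 : ℝ) 1, u * s ∈ G}
  have hG'c : IsClosed G' := by
    have : G' = ⋂ u ∈ Icc (0 : ℝ) 1, {s | u * s ∈ G} := by ext; simp [G']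
    rw [this]
    exact isClosed_biInter fun u _ => hGc.preimage (by fun_prop : Continuous fun s : ℝ => u * s)
  have hG'I : ∀ t ∈ G', 0 ≤ t → ∀ s ∈ Icc 0 t, s ∈ G := by
    intro t ht h0t s hs
    rcases h0t.eq_or_lt with h | h
    · obtain rfl : s = 0 := le_antisymm (h ▸ hs.2) hs.1
      exact h00
    · have := ht (s / t) ⟨div_nonneg hs.1 h0t, (div_le_one h).2 hs.2⟩
      rwa [div_mul_cancel₀ _ h.ne'] at this
  by_contra hcon
  push Not at hcon
  have hlt : ∀ t ∈ G', 0 ≤ t → dist q (φ.symm (σ * t, 0)) < δ := by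
    intro t ht h0t
    rcases h0t.eq_or_lt with h | h
    · rw [← h, mul_zero]
      have : φ.symm ((0 : ℝ), (0 : E)) = q := hsymm0
      rw [this, dist_self]; exact hδ
    · exact hcon t h fun s hs => (hG s).1 (hG'I t ht h0t s hs)
  obtain ⟨R, hR⟩ := hφK.isBounded.exists_norm_le
  have hbd : ∀ s ∈ G, |σ * s| ≤ R := fun s hs => by
    have := hR _ hs
    exact (le_max_left _ _).trans this
  have hall : Icc 0 ((|R| + 1) / |σ|) ⊆ G' := by
    refine (hG'c.inter isClosed_Icc).Icc_subset_of_forall_mem_nhdsWithin ?_ ?_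
    · intro u _; rw [mul_zero]; exact h00
    · rintro x ⟨hxG, hx0, -⟩
      have hxG1 : x ∈ G := by simpa using hxG 1 ⟨zero_le_one, le_rfl⟩
      obtain ⟨hxt, hxr⟩ := (hG x).1 hxG1
      have ev := h4 _ hxr (hδs _ _ hxr (hlt x hxG hx0))
      rw [φ.right_inv hxt] at ev
      have ev2 : ∀ᶠ s in 𝓝 x, s ∈ G := by
        have hc : Tendsto (fun s : ℝ => σ * s) (𝓝 x) (𝓝 (σ * x)) :=
          (continuous_const.mul continuous_id).tendsto x
        filter_upwards [hc.eventually ev] with s hs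
        exact (hG s).2 hs
      obtain ⟨r, hr, hball⟩ := Metric.eventually_nhds_iff.1 ev2
      have : ∀ᶠ s in 𝓝[>] x, s ∈ Ioo x (x + r) := Ioo_mem_nhdsGT (by linarith)
      filter_upwards [this] with s hs u hu
      by_cases hus : u * s ≤ x
      · exact hG'I x hxG hx0 _ ⟨mul_nonneg hu.1 (hx0.trans hs.1.le), hus⟩
      · have h5 : u * s ≤ s := mul_le_of_le_one_left (hx0.trans hs.1.le) hu.2
        refine hball ?_
        rw [Real.dist_eq, abs_lt]
        constructor <;> linarith [hs.2]
  have hpos : 0 < |σ| := abs_pos.2 hσ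
  have hmem : (|R| + 1) / |σ| ∈ G := by
    have := hall ⟨by positivity, le_rfl⟩ 1 ⟨zero_le_one, le_rfl⟩
    simpa using this
  have := hbd _ hmem
  rw [abs_mul, abs_of_pos (a := (|R| + 1) / |σ|) (by positivity), mul_div_cancel₀ _ hpos.ne'] at this
  linarith [le_abs_self R]

lemma branch' [CompactSpace X] {q z : X} {ρ : ℝ} {φ : OpenPartialHomeomorph X (ℝ × E)}
    (h0 : 0 ≤ ε) (hδ : 0 < δ) (hδs : ∀ x y, RS f ε x y → dist x y < δ → RS f (ε / 2) x y)
    (h1 : q ∈ φ.source) (h2 : φ q = 0) (h3 : ∀ y, RS f ε q y → y ∈ φ.source ∧ (φ y).2 = 0)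
    (h4 : ∀ y, RS f ε q y → RS f (ε / 2) q y → ∀ᶠ v in 𝓝 (φ y).1, (v, (0 : E)) ∈ φ.target ∧
        RS f ε q (φ.symm (v, 0))) (hρ : 2 * ρ ≤ δ) (hq : dist z q < ρ) (σ : ℝ) (hσ : σ ≠ 0) :
    ∃ t > 0, (∀ s ∈ Icc 0 t, (σ * s, (0 : E)) ∈ φ.target ∧ RS f ε q (φ.symm (σ * s, 0)) ∧
      dist z (φ.symm (σ * s, 0)) ≤ ρ) ∧ dist z (φ.symm (σ * t, 0)) = ρ ∧
      ContinuousOn (fun s => φ.symm (σ * s, (0 : E))) (Icc 0 t) := by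
  obtain ⟨t, ht, hst, hd⟩ := branch h0 hδ hδs h1 h2 h3 h4 σ hσ
  have hsymm0 : φ.symm (σ * 0, 0) = q := by
    rw [mul_zero]; exact (congrArg φ.symm h2.symm).trans (φ.left_inv h1)
  have hc : ContinuousOn (fun s => φ.symm (σ * s, (0 : E))) (Icc 0 t) :=
    φ.continuousOn_symm.comp (f := fun s : ℝ => (σ * s, (0 : E))) (by fun_prop)
      (fun s hs => (hst s hs).1)
  have hcd : ContinuousOn (fun s => dist z (φ.symm (σ * s, (0 : E)))) (Icc 0 t) :=
    (continuous_const.dist continuous_id).comp_continuousOn hc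
  have hge : ρ < dist z (φ.symm (σ * t, 0)) := by
    have := dist_triangle q z (φ.symm (σ * t, 0))
    rw [dist_comm q z] at this; linarith
  have hT : IsCompact {s ∈ Icc 0 t | dist z (φ.symm (σ * s, (0 : E))) = ρ} := by
    have := hcd.preimage_isClosed_of_isClosed isClosed_Icc (isClosed_singleton (x := ρ))
    exact isCompact_Icc.of_isClosed_subset this inter_subset_left
  have hne : {s ∈ Icc 0 t | dist z (φ.symm (σ * s, (0 : E))) = ρ}.Nonempty := by
    obtain ⟨s, hs, hs'⟩ := intermediate_value_Icc ht.le hcd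
      (show ρ ∈ Icc _ _ from ⟨by simp only [hsymm0]; exact hq.le, hge.le⟩)
    exact ⟨s, hs, hs'⟩
  obtain ⟨t₀, ⟨ht₀, hd₀⟩, hleast⟩ := hT.exists_isLeast hne
  have hsub : Icc 0 t₀ ⊆ Icc 0 t := Icc_subset_Icc_right ht₀.2
  refine ⟨t₀, ?_, fun s hs => ⟨(hst s (hsub hs)).1, (hst s (hsub hs)).2, ?_⟩, hd₀, hc.mono hsub⟩
  · refine lt_of_le_of_ne ht₀.1 fun h => ?_
    rw [← h, hsymm0] at hd₀; linarith
  · by_contra hcon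
    push Not at hcon
    obtain ⟨s', hs', hs''⟩ := intermediate_value_Icc hs.1
      (hcd.mono (Icc_subset_Icc_right (hs.2.trans ht₀.2)))
      (show ρ ∈ Icc _ _ from ⟨by simp only [hsymm0]; exact hq.le, hcon.le⟩)
    have h5 := hleast (show s' ∈ _ from ⟨⟨hs'.1, hs'.2.trans (hs.2.trans ht₀.2)⟩, hs''⟩)
    have h6 : s' = s := le_antisymm hs'.2 (hs.2.trans h5)
    rw [← h6] at hcon; simp only at hs''; linarith

lemma disc {q : X} {φ : OpenPartialHomeomorph X (E × ℝ)} {B : Set X}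
    (h0 : 0 ≤ ε) (hδs : ∀ x y, RS f ε x y → dist x y < δ → RS f (ε / 2) x y)
    (h1 : q ∈ φ.source) (h2 : φ q = 0) (h3 : ∀ y, RS f ε q y → y ∈ φ.source ∧ (φ y).2 = 0)
    (h4 : ∀ y, RS f ε q y → RS f (ε / 2) q y → ∀ᶠ v in 𝓝 (φ y).1, (v, (0 : ℝ)) ∈ φ.target ∧
        RS f ε q (φ.symm (v, 0))) (hB : IsOpen B) [SimplyConnectedSpace B]
    [LocallyPathConnectedSpace B] (hqB : q ∈ B) (hBδ : ∀ y ∈ B, dist q y < δ)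
    (hBne : Bᶜ.Nonempty) :
    ∃ (C S₁ S₂ : Set X), IsPreconnected C ∧ q ∈ C ∧ C ⊆ B ∧ (∀ y ∈ C, RS f ε q y) ∧
      IsOpen S₁ ∧ IsOpen S₂ ∧ Disjoint S₁ S₂ ∧ S₁ ∪ S₂ = B \ C ∧
      ∀ᶠ y in 𝓝 q, (0 < (φ y).2 → y ∈ S₁) ∧ ((φ y).2 < 0 → y ∈ S₂) := by
  let K : Set X := {y | RS f ε q y}
  have hK : IsClosed K := RS_isClosed_right q
  let C := connectedComponentIn (K ∩ B) q
  have hqKB : q ∈ K ∩ B := ⟨RS.refl' h0 q, hqB⟩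
  have hCKB : C ⊆ K ∩ B := connectedComponentIn_subset _ _
  have hCpre : IsPreconnected C := isPreconnected_connectedComponentIn
  have hqC : q ∈ C := mem_connectedComponentIn hqKB
  have hCcl : ∀ z ∈ B, z ∈ closure C → z ∈ C := by
    intro z hz hzC
    have hzK : z ∈ K := hK.closure_subset_iff.2 (fun y hy => (hCKB hy).1) hzC
    have hp : IsPreconnected (insert z C) := hCpre.subset_closure (subset_insert _ _)
      (insert_subset hzC subset_closure)
    exact hp.subset_connectedComponentIn (mem_insert_of_mem _ hqC)
      (insert_subset (show z ∈ K ∩ B from ⟨hzK, hz⟩) hCKB) (mem_insert _ _)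
  let D : Set E := {v | (v, (0 : ℝ)) ∈ φ.target ∧ φ.symm (v, 0) ∈ C}
  have hD : IsOpen D := by
    rw [isOpen_iff_eventually]
    rintro v ⟨hvt, hvC⟩
    have hvK := (hCKB hvC).1
    have ev := h4 _ hvK (hδs _ _ hvK (hBδ _ (hCKB hvC).2))
    rw [φ.right_inv hvt] at ev
    have hcont : ContinuousAt (fun v : E => φ.symm (v, (0 : ℝ))) v :=
      ContinuousAt.comp (f := fun v : E => (v, (0 : ℝ))) (φ.continuousAt_symm hvt) (by fun_prop)
    have ev2 : ∀ᶠ w in 𝓝 v, φ.symm (w, (0 : ℝ)) ∈ B :=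
      hcont.eventually (hB.mem_nhds (hCKB hvC).2)
    obtain ⟨r, hr, hball⟩ := Metric.eventually_nhds_iff_ball.1 (ev.and ev2)
    have hpre : IsPreconnected ((fun v : E => φ.symm (v, (0 : ℝ))) '' ball v r) := by
      refine (convex_ball v r).isPreconnected.image _ ?_
      exact φ.continuousOn_symm.comp (f := fun v : E => (v, (0 : ℝ))) (by fun_prop)
        (fun w hw => (hball w hw).1.1)
    have hsub := hpre.subset_connectedComponentIn (F := K ∩ B)
      (mem_image_of_mem _ (mem_ball_self hr)) (by
        rintro _ ⟨w, hw, rfl⟩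
        exact ⟨(hball w hw).1.2, (hball w hw).2⟩)
    have hEq : connectedComponentIn (K ∩ B) (φ.symm (v, (0 : ℝ))) = C :=
      (connectedComponentIn_eq hvC).symm
    filter_upwards [ball_mem_nhds v hr] with w hw
    exact ⟨(hball w hw).1.1, hEq ▸ hsub (mem_image_of_mem _ hw)⟩
  let N : Set X := (φ.source ∩ φ ⁻¹' (Prod.fst ⁻¹' D)) ∩ B
  have hN : IsOpen N := (φ.isOpen_inter_preimage (hD.preimage continuous_fst)).inter hB
  have hCN : C ⊆ N := by
    intro y hy
    obtain ⟨ha, hb⟩ := h3 y (hCKB hy).1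
    have hpair : ((φ y).1, (0 : ℝ)) = φ y := Prod.ext rfl hb.symm
    refine ⟨⟨ha, ?_, ?_⟩, (hCKB hy).2⟩
    · rw [hpair]; exact φ.map_source ha
    · rw [hpair, φ.left_inv ha]; exact hy
  have hNC : ∀ y ∈ N, (φ y).2 = 0 → y ∈ C := by
    rintro y ⟨⟨ha, -, hb⟩, -⟩ hc
    have hpair : ((φ y).1, (0 : ℝ)) = φ y := Prod.ext rfl hc.symm
    rwa [hpair, φ.left_inv ha] at hb
  let P : Set X := N ∩ (φ.source ∩ φ ⁻¹' {p | 0 < p.2})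
  let Q : Set X := N ∩ (φ.source ∩ φ ⁻¹' {p | p.2 < 0})
  have hP : IsOpen P := hN.inter (φ.isOpen_inter_preimage (isOpen_lt continuous_const continuous_snd))
  have hQ : IsOpen Q := hN.inter (φ.isOpen_inter_preimage (isOpen_lt continuous_snd continuous_const))
  obtain ⟨S₁, S₂, k1, k2, k3, k4, k5⟩ := separation (B := B) (C := C) (N := N) (P := P) (Q := Q)
    hB hCpre hCN hCcl hN inter_subset_right
    (hBne.mono (compl_subset_compl.2 inter_subset_right)) hP hQ
    (by
      rw [Set.disjoint_left]
      rintro a ⟨-, -, ha⟩ ⟨-, -, hb⟩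
      exact lt_asymm (show 0 < (φ a).2 from ha) hb)
    (by
      ext y; constructor
      · rintro ⟨hy, hyC⟩
        rcases lt_trichotomy (φ y).2 0 with h | h | h
        · exact Or.inr ⟨hy, hy.1.1, h⟩
        · exact absurd (hNC y hy h) hyC
        · exact Or.inl ⟨hy, hy.1.1, h⟩
      · rintro (⟨hy, -, h⟩ | ⟨hy, -, h⟩)
        · exact ⟨hy, fun hC => (show 0 < (φ y).2 from h).ne' (h3 y (hCKB hC).1).2⟩
        · exact ⟨hy, fun hC => (show (φ y).2 < 0 from h).ne (h3 y (hCKB hC).1).2⟩) hqC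
  refine ⟨C, S₁, S₂, hCpre, hqC, fun y hy => (hCKB hy).2, fun y hy => (hCKB hy).1, k1, k2, k3, k4, ?_⟩
  filter_upwards [k5, hN.mem_nhds (hCN hqC)] with y hy hyN
  exact ⟨fun h => hy.1 ⟨hyN, hyN.1.1, h⟩, fun h => hy.2 ⟨hyN, hyN.1.1, h⟩⟩

/-- Separation data at a periodic point. -/
structure SD {X : Type*} [MetricSpace X] (f : X ≃ₜ X) (ε : ℝ) (B : Set X) (z : X) (ρ : ℝ)
    (q : X) where
  C : Set X
  S : Bool → Set X
  I : Set X
  e : Bool → X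
  Cpre : IsPreconnected C
  qC : q ∈ C
  CB : C ⊆ B
  CK : ∀ y ∈ C, RS f ε q y
  So : ∀ b, IsOpen (S b)
  Sd : Disjoint (S true) (S false)
  SU : S true ∪ S false = B \ C
  Ipre : IsPreconnected I
  qI : q ∈ I
  IK : ∀ y ∈ I, RS f.symm ε q y
  Iz : ∀ y ∈ I, dist z y ≤ ρ
  eI : ∀ b, e b ∈ I
  eS : ∀ b, e b ∈ S b
  ed : ∀ b, dist z (e b) = ρ

/-- A hyperbolic periodic point with one-dimensional unstable direction. -/
def Hp {X : Type*} [MetricSpace X] (E : Type*) [NormedAddCommGroup E] [NormedSpace ℝ E]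
    (f : X ≃ₜ X) (q : X) : Prop :=
  ∃ (l : ℕ) (φ : OpenPartialHomeomorph X (E × ℝ)), HypChart f l q φ

lemma arc_side {q : X} {C S₁ S₂ B : Set X} {t : ℝ} {β : ℝ → X} (hβ : ContinuousOn β (Icc 0 t))
    (ht : 0 < t) (hβ0 : β 0 = q) (hS₁ : IsOpen S₁) (hS₂ : IsOpen S₂) (hd : Disjoint S₁ S₂)
    (hU : S₁ ∪ S₂ = B \ C) (hB : ∀ s ∈ Ioc 0 t, β s ∈ B) (hC : ∀ s ∈ Ioc 0 t, β s ∉ C)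
    (hev : ∀ᶠ y in 𝓝 q, ∀ s ∈ Ioc 0 t, β s = y → y ∈ S₁) : β t ∈ S₁ := by
  have hpre : IsPreconnected (β '' Ioc 0 t) :=
    isPreconnected_Ioc.image _ (hβ.mono Ioc_subset_Icc_self)
  have hsub : β '' Ioc 0 t ⊆ S₁ ∪ S₂ := by
    rintro _ ⟨s, hs, rfl⟩
    rw [hU]; exact ⟨hB s hs, hC s hs⟩
  have hne : (β '' Ioc 0 t ∩ S₁).Nonempty := by
    have h0 : Tendsto β (𝓝[Ioc 0 t] 0) (𝓝 q) := by
      have := (hβ 0 ⟨le_rfl, ht.le⟩).tendsto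
      rw [hβ0] at this
      exact this.mono_left (nhdsWithin_mono _ Ioc_subset_Icc_self)
    have : (𝓝[Ioc 0 t] (0 : ℝ)).NeBot := by
      rw [← mem_closure_iff_nhdsWithin_neBot, closure_Ioc ht.ne]
      exact ⟨le_rfl, ht.le⟩
    obtain ⟨s, hs, hs'⟩ := ((h0.eventually hev).and self_mem_nhdsWithin).exists
    exact ⟨β s, mem_image_of_mem _ hs', hs s hs' rfl⟩
  exact hpre.subset_left_of_subset_union hS₁ hS₂ hd hsub hne
    (mem_image_of_mem _ ⟨ht, le_rfl⟩)

lemma exists_SD [CompactSpace X] (hx : Xp f α) (h0 : 0 < ε) (hεα : 4 * ε ≤ α) (hδ : 0 < δ)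
    (hδs : ∀ x y, RS f ε x y → dist x y < δ → RS f (ε / 2) x y)
    (hδu : ∀ x y, RS f.symm ε x y → dist x y < δ → RS f.symm (ε / 2) x y)
    {q : X} (hq : Hp E f q) {B : Set X} {z : X} {ρ : ℝ} (hB : IsOpen B) [SimplyConnectedSpace B]
    [LocallyPathConnectedSpace B] (hBδ : ∀ x ∈ B, ∀ y ∈ B, dist x y < δ)
    (hBne : Bᶜ.Nonempty) (hρB : closedBall z ρ ⊆ B) (hρ : 2 * ρ ≤ δ) (hqz : dist z q < ρ) :
    Nonempty (SD f ε B z ρ q) := by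
  obtain ⟨l, φ₀, hc⟩ := hq
  obtain ⟨φ, c₁, c₂, p1, p2, p3, p4, p5, p6, p7⟩ := plaque hx (by linarith) h0 hc
  obtain ⟨ψ, d₁, d₂, r1, r2, r3, r4, r5, r6, r7⟩ := plaque hx.sym (by linarith) h0 hc.swap
  have hqB : q ∈ B := hρB (by rw [mem_closedBall, dist_comm]; exact hqz.le)
  obtain ⟨C, S₁, S₂, k1, k2, k3, k4, k5, k6, k7, k8, k9⟩ :=
    disc h0.le hδs p3 p4 p5 p6 hB hqB (hBδ q hqB) hBne
  have hsymm0 : ∀ σ : ℝ, ψ.symm (σ * 0, 0) = q := by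
    intro σ
    rw [mul_zero]; exact (congrArg ψ.symm r4.symm).trans (ψ.left_inv r3)
  have hev : ∀ᶠ y in 𝓝 q, (0 < (ψ y).1 → y ∈ S₁) ∧ ((ψ y).1 < 0 → y ∈ S₂) := by
    filter_upwards [k9, p7, r7] with y h1 h2 h3
    rw [h2] at h1
    rw [h3]
    simp only [OpenPartialHomeomorph.coe_trans, Function.comp,
      Homeomorph.toOpenPartialHomeomorph_apply, Homeomorph.coe_prodComm, Prod.fst_swap,
      smul_eq_mul] at h1 ⊢
    constructor
    · intro h
      exact h1.1 (mul_pos p2 (pos_of_mul_pos_right h r1.le))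
    · intro h
      exact h1.2 (mul_neg_of_pos_of_neg p2 (neg_of_mul_neg_right h r1.le))
  obtain ⟨t₁, a1, a2, a3, a4⟩ := branch' h0.le hδ hδu r3 r4 r5 r6 hρ hqz 1 one_ne_zero
  obtain ⟨t₂, b1, b2, b3, b4⟩ := branch' h0.le hδ hδu r3 r4 r5 r6 hρ hqz (-1) (by norm_num)
  have havoid : ∀ σ s : ℝ, σ ≠ 0 → s ≠ 0 → (σ * s, (0 : E)) ∈ ψ.target →
      RS f.symm ε q (ψ.symm (σ * s, 0)) → ψ.symm (σ * s, 0) ∉ C := by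
    intro σ s hσ hs ht hr hC
    have := hx _ _ ((k4 _ hC).mono (by linarith)) (hr.mono (by linarith))
    have h5 := congrArg ψ this
    rw [r4, ψ.right_inv ht] at h5
    have h6 := congrArg Prod.fst h5
    exact mul_ne_zero hσ hs h6.symm
  have hinB : ∀ y, dist z y ≤ ρ → y ∈ B := fun y hy => hρB (by
    rw [mem_closedBall, dist_comm]; exact hy)
  let β₁ : ℝ → X := fun s => ψ.symm (1 * s, (0 : E))
  let β₂ : ℝ → X := fun s => ψ.symm (-1 * s, (0 : E))
  have e1 : β₁ t₁ ∈ S₁ := by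
    refine arc_side a4 a1 (hsymm0 1) k5 k6 k7 k8 (fun s hs => hinB _ (a2 s ⟨hs.1.le, hs.2⟩).2.2)
      (fun s hs => havoid _ s one_ne_zero hs.1.ne' (a2 s ⟨hs.1.le, hs.2⟩).1
        (a2 s ⟨hs.1.le, hs.2⟩).2.1) ?_
    filter_upwards [hev] with y hy s hs hsy
    refine hy.1 ?_
    rw [← hsy, ψ.right_inv (a2 s ⟨hs.1.le, hs.2⟩).1]
    simpa using hs.1
  have e2 : β₂ t₂ ∈ S₂ := by
    refine arc_side b4 b1 (hsymm0 (-1)) k6 k5 k7.symm (by rw [union_comm]; exact k8)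
      (fun s hs => hinB _ (b2 s ⟨hs.1.le, hs.2⟩).2.2)
      (fun s hs => havoid _ s (by norm_num) hs.1.ne' (b2 s ⟨hs.1.le, hs.2⟩).1
        (b2 s ⟨hs.1.le, hs.2⟩).2.1) ?_
    filter_upwards [hev] with y hy s hs hsy
    refine hy.2 ?_
    rw [← hsy, ψ.right_inv (b2 s ⟨hs.1.le, hs.2⟩).1]
    simpa using hs.1
  have q1 : q ∈ β₁ '' Icc 0 t₁ := ⟨0, ⟨le_rfl, a1.le⟩, hsymm0 1⟩
  have q2 : q ∈ β₂ '' Icc 0 t₂ := ⟨0, ⟨le_rfl, b1.le⟩, hsymm0 (-1)⟩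
  refine ⟨{
    C := C
    S := fun b => if b then S₁ else S₂
    I := β₁ '' Icc 0 t₁ ∪ β₂ '' Icc 0 t₂
    e := fun b => if b then β₁ t₁ else β₂ t₂
    Cpre := k1
    qC := k2
    CB := k3
    CK := k4
    So := by rintro (_ | _) <;> simp [k5, k6]
    Sd := by simpa using k7
    SU := by simpa using k8
    Ipre := IsPreconnected.union q q1 q2 (isPreconnected_Icc.image _ a4)
      (isPreconnected_Icc.image _ b4)
    qI := Or.inl q1
    IK := by
      rintro _ (⟨s, hs, rfl⟩ | ⟨s, hs, rfl⟩)
      · exact (a2 s hs).2.1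
      · exact (b2 s hs).2.1
    Iz := by
      rintro _ (⟨s, hs, rfl⟩ | ⟨s, hs, rfl⟩)
      · exact (a2 s hs).2.2
      · exact (b2 s hs).2.2
    eI := by
      rintro (_ | _)
      · exact Or.inr ⟨t₂, ⟨b1.le, le_rfl⟩, by simp⟩
      · exact Or.inl ⟨t₁, ⟨a1.le, le_rfl⟩, by simp⟩
    eS := by rintro (_ | _) <;> simp [e1, e2]
    ed := by
      rintro (_ | _)
      · exact b3
      · exact a3 }⟩
end part5

/-! ## Part 6: combinatorics of the separating discs -/

section part6
open Topology Filter

lemma exists_box {X : Type*} [MetricSpace X] [Nontrivial X] (n : ℕ)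
    [ChartedSpace (EuclideanSpace ℝ (Fin n)) X] (z : X) {r : ℝ} (hr : 0 < r) :
    ∃ B : Set X, IsOpen B ∧ z ∈ B ∧ B ⊆ ball z r ∧ Bᶜ.Nonempty ∧ SimplyConnectedSpace B ∧
      LocallyPathConnectedSpace B := by
  obtain ⟨z', hz'⟩ := exists_ne z
  let φ := chartAt (EuclideanSpace ℝ (Fin n)) z
  have hzs : z ∈ φ.source := mem_chart_source _ z
  have hO : ball z r ∩ {z'}ᶜ ∈ 𝓝 z :=
    inter_mem (ball_mem_nhds z hr) (isOpen_compl_singleton.mem_nhds hz'.symm)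
  have h1 : φ.symm ⁻¹' (ball z r ∩ {z'}ᶜ) ∈ 𝓝 (φ z) := by
    refine (φ.continuousAt_symm (φ.map_source hzs)).preimage_mem_nhds ?_
    rw [φ.left_inv hzs]; exact hO
  obtain ⟨s, hs, hsub⟩ := Metric.mem_nhds_iff.1
    (inter_mem h1 (φ.open_target.mem_nhds (φ.map_source hzs)))
  have hst : ball (φ z) s ⊆ φ.target := fun y hy => (hsub hy).2
  have hsub' : φ.symm '' ball (φ z) s ⊆ ball z r ∩ {z'}ᶜ := by
    rintro _ ⟨y, hy, rfl⟩; exact (hsub hy).1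
  have hBo : IsOpen (φ.symm '' ball (φ z) s) :=
    φ.symm.isOpen_image_of_subset_source isOpen_ball hst
  refine ⟨φ.symm '' ball (φ z) s, hBo, ⟨φ z, mem_ball_self hs, φ.left_inv hzs⟩,
    fun y hy => (hsub' hy).1, ⟨z', fun h => (hsub' h).2 rfl⟩, ?_, ?_⟩
  · have e : ball (φ z) s ≃ₜ (φ.symm '' ball (φ z) s) :=
      φ.symm.homeomorphOfImageSubsetSource hst rfl
    have := contractibleSpace_ball (x := φ z) hs
    have := e.symm.contractibleSpace
    infer_instance
  · have := ChartedSpace.locallyPathConnectedSpace (EuclideanSpace ℝ (Fin n)) X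
    exact hBo.locallyPathConnectedSpace

variable {X : Type*} [MetricSpace X] {f : X ≃ₜ X} {α ε : ℝ}

lemma per_RS {q r : X} {l l' : ℕ} (hl : 1 ≤ l) (hl' : 1 ≤ l') (hq : f^[l] q = q)
    (hr : f^[l'] r = r) (h : RS f ε q r) : RS f.symm ε q r := by
  intro k
  have key : ∀ p : X, f^[l * l' * k] p = p → f.symm^[k] p = f^[l * l' * k - k] p := by
    intro p hp
    have hle : k ≤ l * l' * k := Nat.le_mul_of_pos_left k (by positivity)
    have : f^[k] (f^[l * l' * k - k] p) = p := by
      rw [← Function.iterate_add_apply, Nat.add_sub_cancel' hle, hp]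
    conv_lhs => rw [← this]
    exact symm_iter_iter f k _
  rw [key q, key r]
  · exact h _
  · rw [mul_comm l l', mul_assoc]; exact per_iter hr _
  · rw [mul_assoc]; exact per_iter hq _

/-- bracket set -/
lemma bracket_closed [CompactSpace X] (z : X) (ρ : ℝ) :
    IsClosed {p : X × X | ∃ w, dist z w ≤ ρ ∧ RS f.symm ε p.1 w ∧ RS f ε p.2 w} := by
  have h : IsClosed {p : (X × X) × X | dist z p.2 ≤ ρ ∧ RS f.symm ε p.1.1 p.2 ∧
      RS f ε p.1.2 p.2} := by
    refine (isClosed_le (f := fun p : (X × X) × X => dist z p.2) (by fun_prop)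
      continuous_const).inter (IsClosed.inter ?_ ?_)
    · exact RS_isClosed.preimage (f := fun p : (X × X) × X => (p.1.1, p.2)) (by fun_prop)
    · exact RS_isClosed.preimage (f := fun p : (X × X) × X => (p.1.2, p.2)) (by fun_prop)
  have := isClosedMap_fst_of_compactSpace _ h
  convert this using 1
  ext p; constructor
  · rintro ⟨w, hw⟩; exact ⟨(p, w), hw, rfl⟩
  · rintro ⟨⟨p', w⟩, hw, rfl⟩; exact ⟨w, hw⟩

lemma bracket_near [CompactSpace X] (hx : Xp f α) (hε : 2 * ε ≤ α) {x y w : X}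
    (h1 : RS f.symm ε x w) (h2 : RS f ε y w) {W : Set X} (hW : IsOpen W) (hw : w ∈ W) :
    ∀ᶠ p in 𝓝 x ×ˢ 𝓝 y, ∀ w', RS f.symm ε p.1 w' → RS f ε p.2 w' → w' ∈ W := by
  have h : IsClosed {p : (X × X) × X | p.2 ∈ Wᶜ ∧ RS f.symm ε p.1.1 p.2 ∧
      RS f ε p.1.2 p.2} := by
    refine (hW.isClosed_compl.preimage continuous_snd).inter (IsClosed.inter ?_ ?_)
    · exact RS_isClosed.preimage (f := fun p : (X × X) × X => (p.1.1, p.2)) (by fun_prop)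
    · exact RS_isClosed.preimage (f := fun p : (X × X) × X => (p.1.2, p.2)) (by fun_prop)
  have hc := isClosedMap_fst_of_compactSpace _ h
  rw [← nhds_prod_eq]
  have hn : (x, y) ∉ Prod.fst '' {p : (X × X) × X | p.2 ∈ Wᶜ ∧ RS f.symm ε p.1.1 p.2 ∧
      RS f ε p.1.2 p.2} := by
    rintro ⟨⟨p, w'⟩, ⟨k1, k2, k3⟩, rfl⟩
    have := xp_unique hx hε h2 k3 h1 k2
    exact k1 (this ▸ hw)
  filter_upwards [hc.isOpen_compl.mem_nhds hn] with p hp w' k1 k2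
  by_contra hcon
  exact hp ⟨(p, w'), ⟨hcon, k1, k2⟩, rfl⟩

/-- product-like points -/
def Reg {X : Type*} [MetricSpace X] (f : X ≃ₜ X) (ε : ℝ) (x : X) : Prop :=
  ∃ r > 0, ∀ u ∈ ball x r, ∀ v ∈ ball x r, ∃ w, RS f.symm ε u w ∧ RS f ε v w

lemma not_RS_near [LocallyConnectedSpace X] {x w : X} (h : ¬ RS f ε x w) {B : Set X}
    (hB : IsOpen B) (hw : w ∈ B) : ∃ W : Set X, IsOpen W ∧ w ∈ W ∧ IsPreconnected W ∧ W ⊆ B ∧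
      ∀ᶠ q in 𝓝 x, ∀ y ∈ W, ¬ RS f ε q y := by
  have ho : IsOpen {p : X × X | RS f ε p.1 p.2}ᶜ := RS_isClosed.isOpen_compl
  have hm : {p : X × X | RS f ε p.1 p.2}ᶜ ∈ 𝓝 x ×ˢ 𝓝 w := by
    rw [← nhds_prod_eq]; exact ho.mem_nhds h
  obtain ⟨O, hO, O', hO', hsub⟩ := Filter.mem_prod_iff.1 hm
  obtain ⟨W, hW, hWo, hwW, hWc⟩ := locallyConnectedSpace_iff_subsets_isOpen_isConnected.1
    ‹_› w (O' ∩ B) (inter_mem hO' (hB.mem_nhds hw))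
  refine ⟨W, hWo, hwW, hWc.isPreconnected, fun y hy => (hW hy).2, ?_⟩
  filter_upwards [hO] with q hq y hy
  exact hsub (show (q, y) ∈ O ×ˢ O' from ⟨hq, (hW hy).1⟩)

namespace SD
variable {B : Set X} {z : X} {ρ : ℝ} {q r : X}

/-- exchange the two sides -/
def swap (d : SD f ε B z ρ q) : SD f ε B z ρ q where
  C := d.C
  S := fun b => d.S (!b)
  I := d.I
  e := fun b => d.e (!b)
  Cpre := d.Cpre
  qC := d.qC
  CB := d.CB
  CK := d.CK
  So := fun b => d.So _
  Sd := d.Sd.symm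
  SU := by rw [union_comm]; exact d.SU
  Ipre := d.Ipre
  qI := d.qI
  IK := d.IK
  Iz := d.Iz
  eI := fun b => d.eI _
  eS := fun b => d.eS _
  ed := fun b => d.ed _

lemma cover (d : SD f ε B z ρ q) {y : X} (hy : y ∈ B) (hC : y ∉ d.C) : ∃ b, y ∈ d.S b := by
  rcases d.SU.ge ⟨hy, hC⟩ with h | h
  · exact ⟨_, h⟩
  · exact ⟨_, h⟩

lemma disj (d : SD f ε B z ρ q) (a : Bool) : Disjoint (d.S a) (d.S (!a)) := by
  cases a
  · exact d.Sd.symm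
  · exact d.Sd

lemma union (d : SD f ε B z ρ q) (a : Bool) : d.S a ∪ d.S (!a) = B \ d.C := by
  cases a
  · rw [union_comm]; exact d.SU
  · exact d.SU

lemma uniq (d : SD f ε B z ρ q) {y : X} {a b : Bool} (ha : y ∈ d.S a) (hb : y ∈ d.S b) :
    a = b := by
  by_contra h
  have : b = !a := by cases a <;> cases b <;> simp_all
  subst this
  exact (d.disj a).le_bot ⟨ha, hb⟩

lemma notC (d : SD f ε B z ρ q) {y : X} {a : Bool} (ha : y ∈ d.S a) : y ∉ d.C :=
  ((d.union a).le (Or.inl ha)).2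

lemma side (d : SD f ε B z ρ q) {A : Set X} (hA : IsPreconnected A) (hAB : A ⊆ B)
    (hAC : Disjoint A d.C) {y : X} {a : Bool} (hy : y ∈ A) (hya : y ∈ d.S a) : A ⊆ d.S a :=
  hA.subset_left_of_subset_union (d.So a) (d.So (!a)) (d.disj a)
    (fun x hx => (d.union a).ge ⟨hAB hx, fun h => hAC.le_bot ⟨hx, h⟩⟩) ⟨y, hy, hya⟩

lemma C_disjoint (hx : Xp f α) (hε : 4 * ε ≤ α) (h0 : 0 < ε) (d : SD f ε B z ρ q)
    (d' : SD f ε B z ρ r) (hq : ∃ l, 1 ≤ l ∧ f^[l] q = q) (hr : ∃ l, 1 ≤ l ∧ f^[l] r = r)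
    (hne : q ≠ r) : Disjoint d.C d'.C := by
  rw [Set.disjoint_left]
  intro y hy hy'
  obtain ⟨l, hl, hlq⟩ := hq
  obtain ⟨l', hl', hlr⟩ := hr
  have h1 := (d.CK y hy).tri (d'.CK y hy').sym
  have h2 := per_RS hl hl' hlq hlr h1
  exact hne (hx _ _ (h1.mono (by linarith)) (h2.mono (by linarith)))

lemma opp (hB : IsPreconnected B) (d : SD f ε B z ρ q) (d' : SD f ε B z ρ r)
    (hd : Disjoint d.C d'.C) {a b : Bool} (ha : r ∈ d.S a) (hb : q ∈ d'.S b) :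
    d.S (!a) ⊆ d'.S b := by
  have hcon : IsPreconnected (d.S (!a) ∪ d.C) :=
    side_connected hB d.Cpre ⟨q, d.qC⟩ d.CB (d.So _) (d.So a) (d.disj a).symm
      (by rw [union_comm]; exact d.union a)
  have hCr : d'.C ⊆ d.S a := d.side d'.Cpre d'.CB hd.symm d'.qC ha
  have := d'.side hcon (union_subset (fun y hy => ((d.union a).le (Or.inr hy)).1) d.CB) (by
    rw [Set.disjoint_left]
    rintro y (hy | hy) hy'
    · exact (d.disj a).le_bot ⟨hCr hy', hy⟩
    · exact hd.le_bot ⟨hy, hy'⟩) (Or.inr d.qC) hb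
  exact subset_union_left.trans this

lemma transfer (d : SD f ε B z ρ q) {r' : X} (d₁ : SD f ε B z ρ r) (d₂ : SD f ε B z ρ r')
    (h1 : Disjoint d.C d₁.C) (h2 : Disjoint d.C d₂.C) {W : Set X} (hW : IsPreconnected W)
    (hWB : W ⊆ B) (hWC : Disjoint W d.C) {w₁ w₂ : X} (hw1 : w₁ ∈ W) (hw2 : w₂ ∈ W)
    (hw1' : w₁ ∈ d₁.C) (hw2' : w₂ ∈ d₂.C) {a : Bool} (ha : r ∈ d.S a) : r' ∈ d.S a := by
  have k1 := d.side d₁.Cpre d₁.CB h1.symm d₁.qC ha hw1'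
  have k2 := d.side hW hWB hWC hw1 k1 hw2
  exact d.side d₂.Cpre d₂.CB h2.symm hw2' k2 d₂.qC

lemma cross (d : SD f ε B z ρ q) (d' : SD f ε B z ρ r) (hρB : closedBall z ρ ⊆ B)
    (h : ∀ b, d.e b ∈ d'.S b) : ∃ w ∈ d.I, w ∈ d'.C := by
  by_contra hcon
  push Not at hcon
  have := d'.side d.Ipre (fun y hy => hρB (by
    rw [mem_closedBall, dist_comm]; exact d.Iz y hy)) (Set.disjoint_left.2 hcon)
    (d.eI true) (h true) (d.eI false)
  exact absurd (d'.uniq this (h false)) (by simp)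
end SD
end part6

/-! ## Part 7: local finiteness -/

section part7
open Topology Filter
variable {X : Type*} [MetricSpace X] {f : X ≃ₜ X} {α ε : ℝ}

lemma exists_cover [CompactSpace X] [LocallyConnectedSpace X] (hx : Xp f α) (h0 : 0 < ε)
    (hε : 4 * ε ≤ α) {B : Set X} (hB : IsOpen B) {z : X} {ρ : ℝ} (hρ : 0 < ρ)
    (hρB : closedBall z ρ ⊆ B) :
    ∃ (t : Finset X) (V : X → Set X) (η : ℝ), 0 < η ∧ η ≤ ρ ∧
      (∀ j ∈ t, IsPreconnected (V j) ∧ V j ⊆ B ∧ j ∈ V j) ∧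
      (∀ q, dist z q < η → ∀ j ∈ t, ∀ y ∈ V j, ¬ RS f ε q y) ∧
      (∀ q, dist z q < η → ∀ e, dist z e = ρ → RS f.symm ε q e → ∃ j ∈ t, e ∈ V j) := by
  let Sg : Set X := {e | dist z e = ρ ∧ RS f.symm ε z e}
  have hSgc : IsClosed Sg :=
    (isClosed_eq (f := fun e => dist z e) (by fun_prop) continuous_const).inter
      (RS_isClosed_right z)
  have hV : ∀ e : X, ∃ W : Set X, e ∈ Sg → (IsOpen W ∧ e ∈ W ∧ IsPreconnected W ∧ W ⊆ B ∧
      ∀ᶠ q in 𝓝 z, ∀ y ∈ W, ¬ RS f ε q y) := by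
    intro e
    by_cases he : e ∈ Sg
    · have hne : ¬ RS f ε z e := by
        intro h
        have := hx z e (h.mono (by linarith)) (he.2.mono (by linarith))
        have h2 := he.1
        rw [this, dist_self] at h2; linarith
      obtain ⟨W, hW⟩ := not_RS_near hne hB (hρB (by
        rw [mem_closedBall, dist_comm]; exact he.1.le))
      exact ⟨W, fun _ => hW⟩
    · exact ⟨∅, fun h => absurd h he⟩
  choose V hV using hV
  obtain ⟨t, htS, htc⟩ := hSgc.isCompact.elim_nhds_subcover V
    (fun e he => (hV e he).1.mem_nhds (hV e he).2.1)
  have ev1 : ∀ᶠ q in 𝓝 z, ∀ j ∈ t, ∀ y ∈ V j, ¬ RS f ε q y := by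
    rw [Filter.eventually_all_finset]
    exact fun j hj => (hV j (htS j hj)).2.2.2.2
  have hUo : IsOpen (⋃ j ∈ t, V j) := isOpen_biUnion fun j hj => (hV j (htS j hj)).1
  have ev2 : ∀ᶠ q in 𝓝 z, ∀ e, dist z e = ρ → RS f.symm ε q e → ∃ j ∈ t, e ∈ V j := by
    have hc : IsClosed {p : X × X | dist z p.2 = ρ ∧ RS f.symm ε p.1 p.2 ∧
        p.2 ∈ (⋃ j ∈ t, V j)ᶜ} :=
      (isClosed_eq (f := fun p : X × X => dist z p.2) (by fun_prop) continuous_const).inter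
        (RS_isClosed.inter (hUo.isClosed_compl.preimage continuous_snd))
    have hc' := isClosedMap_fst_of_compactSpace _ hc
    have hn : z ∉ Prod.fst '' {p : X × X | dist z p.2 = ρ ∧ RS f.symm ε p.1 p.2 ∧
        p.2 ∈ (⋃ j ∈ t, V j)ᶜ} := by
      rintro ⟨⟨z', e⟩, ⟨k1, k2, k3⟩, hz⟩
      simp only at hz k1 k2 k3
      subst hz
      exact k3 (htc ⟨k1, k2⟩)
    filter_upwards [hc'.isOpen_compl.mem_nhds hn] with q hq e h1 h2
    by_contra hcon
    push Not at hcon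
    exact hq ⟨(q, e), ⟨h1, h2, by simpa using hcon⟩, rfl⟩
  obtain ⟨η, hη, hb⟩ := Metric.eventually_nhds_iff.1 (ev1.and ev2)
  refine ⟨t, V, min η ρ, lt_min hη hρ, min_le_right _ _, fun j hj => ?_, fun q hq => ?_,
    fun q hq => ?_⟩
  · have := hV j (htS j hj)
    exact ⟨this.2.2.1, this.2.2.2.1, this.2.1⟩
  · exact (hb (by rw [dist_comm]; exact hq.trans_le (min_le_left _ _))).1
  · exact (hb (by rw [dist_comm]; exact hq.trans_le (min_le_left _ _))).2

lemma bool_aux1 : ∀ a a' : Bool, (true = !a → true = !a') → (true = !a' → true = !a) → a = a' := by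
  decide

lemma bool_aux2 : ∀ a x y : Bool, (x = !a → y = !a) → (y = !a → x = !a) → x = y := by
  decide

/-- abstract type lemma: relation between types of two discs -/
lemma type_rel {B : Set X} {z : X} {ρ : ℝ} {q r : X} {ι : Type*} {V : ι → Set X}
    (hVne : ∀ j, (V j).Nonempty) (hB : IsPreconnected B) (d : SD f ε B z ρ q)
    (d' : SD f ε B z ρ r) (hd : Disjoint d.C d'.C) {v v' : ι → Bool}
    (hv : ∀ j, V j ⊆ d.S (v j)) (hv' : ∀ j, V j ⊆ d'.S (v' j)) {a b : Bool}
    (ha : r ∈ d.S a) (hb : q ∈ d'.S b) (j : ι) (hj : v j = !a) : v' j = b := by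
  obtain ⟨y, hy⟩ := hVne j
  have h1 := hv j hy
  rw [hj] at h1
  exact d'.uniq (hv' j hy) (SD.opp hB d d' hd ha hb h1)

set_option maxHeartbeats 1000000 in
lemma local_finite [CompactSpace X] [LocallyConnectedSpace X] (hx : Xp f α) (h0 : 0 < ε)
    (hε : 4 * ε ≤ α) {B : Set X} (hB : IsOpen B) (hBc : IsPreconnected B) {z : X} {ρ : ℝ}
    (hρ : 0 < ρ) (hρB : closedBall z ρ ⊆ B) {Per : Set X} (hdense : Dense Per)
    (hper : ∀ q ∈ Per, ∃ l, 1 ≤ l ∧ f^[l] q = q)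
    (hsd : ∀ q ∈ Per, dist z q < ρ → Nonempty (SD f ε B z ρ q)) :
    ∃ η > 0, ∃ F : Set (Set X), F.Finite ∧ (∀ A ∈ F, ∀ x ∈ A, ∀ y ∈ A, RS f ε x y) ∧
      ∀ x ∈ ball z η, ¬ Reg f ε x → ∃ A ∈ F, x ∈ A := by
  classical
  obtain ⟨t, V', η, hη, hηρ, hV1, hV2, hV3⟩ := exists_cover hx h0 hε hB hρ hρB
  let V : t → Set X := fun j => V' j
  have hVne : ∀ j, (V j).Nonempty := fun j => ⟨j, (hV1 j j.2).2.2⟩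
  -- the sides attained
  have hatt : ∀ q, dist z q < η → ∀ d : SD f ε B z ρ q, ∀ b, ∃ j : t, d.e b ∈ V j := by
    intro q hq d b
    obtain ⟨j, hj, hj'⟩ := hV3 q hq _ (d.ed b) (d.IK _ (d.eI b))
    exact ⟨⟨j, hj⟩, hj'⟩
  have hj0 : Nonempty t := by
    obtain ⟨q, hq, hqz⟩ := hdense.exists_mem_open isOpen_ball ⟨z, mem_ball_self hη⟩
    rw [mem_ball, dist_comm] at hqz
    obtain ⟨d⟩ := hsd q hq (hqz.trans_le hηρ)
    obtain ⟨j, -⟩ := hatt q hqz d true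
    exact ⟨j⟩
  obtain ⟨j0⟩ := hj0
  have hdat : ∀ q, q ∈ Per ∧ dist z q < η → ∃ (d : SD f ε B z ρ q) (v : t → Bool),
      (∀ j, V j ⊆ d.S (v j)) ∧ v j0 = true := by
    rintro q ⟨hq, hqz⟩
    obtain ⟨d⟩ := hsd q hq (hqz.trans_le hηρ)
    have hdis : ∀ j, Disjoint (V j) d.C := fun j => by
      rw [Set.disjoint_left]; intro y hy hyC
      exact hV2 q hqz j j.2 y hy (d.CK y hyC)
    have : ∀ j, ∃ b, V j ⊆ d.S b := by
      intro j
      obtain ⟨y, hy⟩ := hVne j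
      obtain ⟨b, hb⟩ := d.cover ((hV1 j j.2).2.1 hy) (fun h => (hdis j).le_bot ⟨hy, h⟩)
      exact ⟨b, d.side (hV1 j j.2).1 (hV1 j j.2).2.1 (hdis j) hy hb⟩
    choose v hv using this
    rcases h : v j0 with _ | _
    · refine ⟨d.swap, fun j => !(v j), fun j => ?_, by simp [h]⟩
      simpa [SD.swap] using hv j
    · exact ⟨d, v, hv, h⟩
  let Pt : (t → Bool) → Set X := fun v => {q | q ∈ Per ∧ dist z q < η ∧
    ∃ d : SD f ε B z ρ q, (∀ j, V j ⊆ d.S (v j)) ∧ v j0 = true}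
  have hval : ∀ {q : X} (d : SD f ε B z ρ q) {v : t → Bool}, (∀ j, V j ⊆ d.S (v j)) →
      dist z q < η → ∀ b, ∃ j, v j = b ∧ d.e b ∈ V j := by
    intro q d v hv hq b
    obtain ⟨j, hj⟩ := hatt q hq d b
    exact ⟨j, d.uniq (hv j hj) (d.eS b), hj⟩
  have hcross : ∀ {q r : X} (d : SD f ε B z ρ q) (d' : SD f ε B z ρ r) {v : t → Bool},
      (∀ j, V j ⊆ d.S (v j)) → (∀ j, V j ⊆ d'.S (v j)) → dist z q < η →
      ∃ w ∈ d.I, w ∈ d'.C := by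
    intro q r d d' v hv hv' hq
    refine SD.cross d d' hρB fun b => ?_
    obtain ⟨j, hj, hj'⟩ := hval d hv hq b
    rw [← hj]
    have := hv' j (hj ▸ hj')
    convert this using 2
  have hopp : ∀ {q r : X} (d : SD f ε B z ρ q) (d' : SD f ε B z ρ r) {v : t → Bool},
      (∀ j, V j ⊆ d.S (v j)) → (∀ j, V j ⊆ d'.S (v j)) → dist z q < η →
      Disjoint d.C d'.C → ∀ {a}, r ∈ d.S a → q ∈ d'.S (!a) := by
    intro q r d d' v hv hv' hq hd a ha
    obtain ⟨b, hb⟩ := d'.cover (d.CB d.qC) (fun h => hd.le_bot ⟨d.qC, h⟩)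
    obtain ⟨j, hj, -⟩ := hval d hv hq (!a)
    have := type_rel hVne hBc d d' hd hv hv' ha hb j hj
    rw [← hj, this]; exact hb
  have hbrc : ∀ v x y, x ∈ closure (Pt v) → y ∈ closure (Pt v) →
      ∃ w, dist z w ≤ ρ ∧ RS f.symm ε x w ∧ RS f ε y w := by
    intro v x y hx' hy'
    have hsub : Pt v ×ˢ Pt v ⊆
        {p : X × X | ∃ w, dist z w ≤ ρ ∧ RS f.symm ε p.1 w ∧ RS f ε p.2 w} := by
      rintro ⟨q, r⟩ ⟨⟨hq, hqz, d, hd, -⟩, ⟨hr, hrz, d', hd', -⟩⟩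
      obtain ⟨w, hw, hw'⟩ := hcross d d' hd hd' hqz
      exact ⟨w, d.Iz w hw, d.IK w hw, d'.CK w hw'⟩
    have := (bracket_closed (f := f) (ε := ε) z ρ).closure_subset_iff.2 hsub
    rw [closure_prod_eq] at this
    exact this (show (x, y) ∈ _ from ⟨hx', hy'⟩)
  have claim : ∀ v₁ v₂, v₁ ≠ v₂ → ∀ x y, x ∈ closure (Pt v₁) → x ∈ closure (Pt v₂) →
      y ∈ closure (Pt v₁) → y ∈ closure (Pt v₂) → RS f ε x y := by
    intro v₁ v₂ hne x y hx1 hx2 hy1 hy2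
    by_contra hnR
    obtain ⟨w, hwz, hwx, hwy⟩ := hbrc v₁ x y hx1 hy1
    obtain ⟨u, huz, huy, hux⟩ := hbrc v₁ y x hy1 hx1
    have hwB : w ∈ B := hρB (by rw [mem_closedBall, dist_comm]; exact hwz)
    have huB : u ∈ B := hρB (by rw [mem_closedBall, dist_comm]; exact huz)
    have hnw : ¬ RS f ε x w := by
      intro h
      have := hx x w (h.mono (by linarith)) (hwx.mono (by linarith))
      rw [← this] at hwy
      exact hnR hwy.sym
    have hnu : ¬ RS f ε y u := by
      intro h
      have := hx y u (h.mono (by linarith)) (huy.mono (by linarith))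
      rw [← this] at hux
      exact hnR hux
    obtain ⟨W, hWo, hwW, hWc, hWB, hWe⟩ := not_RS_near hnw hB hwB
    obtain ⟨U, hUo, huU, hUc, hUB, hUe⟩ := not_RS_near hnu hB huB
    have hxy : x ≠ y := by rintro rfl; exact hnR (RS.refl' h0.le _)
    have e1 := bracket_near hx (by linarith) hwx hwy hWo hwW
    have e2 := (bracket_near hx (by linarith) huy hux hUo huU)
    have e2' : ∀ᶠ p in 𝓝 x ×ˢ 𝓝 y, ∀ w', RS f.symm ε p.2 w' → RS f ε p.1 w' → w' ∈ U :=
      Filter.eventually_swap_iff.1 e2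
    have e3 : ∀ᶠ p in 𝓝 x ×ˢ 𝓝 y, p.1 ≠ p.2 := by
      rw [← nhds_prod_eq]
      exact (isOpen_ne_fun continuous_fst continuous_snd).mem_nhds hxy
    obtain ⟨O, hO, O', hO', hsub⟩ := Filter.mem_prod_iff.1
      ((e1.and e2').and (e3.and ((hWe.prod_inl (𝓝 y)).and (hUe.prod_inr (𝓝 x)))))
    obtain ⟨q, hqO, hq, hqz, d, hd, hd0⟩ := mem_closure_iff_nhds.1 hx1 O hO
    obtain ⟨q', hqO', hq', hqz', d', hd', hd0'⟩ := mem_closure_iff_nhds.1 hx2 O hO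
    obtain ⟨r, hrO, hr, hrz, c, hc, -⟩ := mem_closure_iff_nhds.1 hy1 O' hO'
    obtain ⟨r', hrO', hr', hrz', c', hc', -⟩ := mem_closure_iff_nhds.1 hy2 O' hO'
    have prop : ∀ q ∈ O, ∀ r ∈ O', (∀ w', RS f.symm ε q w' → RS f ε r w' → w' ∈ W) ∧
        (∀ w', RS f.symm ε r w' → RS f ε q w' → w' ∈ U) ∧ q ≠ r ∧
        (∀ y ∈ W, ¬ RS f ε q y) ∧ (∀ y ∈ U, ¬ RS f ε r y) := by
      intro q hq r hr
      have := hsub (show (q, r) ∈ O ×ˢ O' from ⟨hq, hr⟩)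
      exact ⟨this.1.1, this.1.2, this.2.1, this.2.2.1, this.2.2.2⟩
    have p11 := prop q hqO r hrO
    have p12 := prop q hqO r' hrO'
    have p21 := prop q' hqO' r hrO
    have p22 := prop q' hqO' r' hrO'
    have D11 := SD.C_disjoint hx hε h0 d c (hper q hq) (hper r hr) p11.2.2.1
    have D12 := SD.C_disjoint hx hε h0 d c' (hper q hq) (hper r' hr') p12.2.2.1
    have D21 := SD.C_disjoint hx hε h0 d' c (hper q' hq') (hper r hr) p21.2.2.1
    have D22 := SD.C_disjoint hx hε h0 d' c' (hper q' hq') (hper r' hr') p22.2.2.1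
    -- brackets
    obtain ⟨b1, b1I, b1C⟩ := hcross d c hd hc hqz
    obtain ⟨b2, b2I, b2C⟩ := hcross d' c' hd' hc' hqz'
    obtain ⟨b3, b3I, b3C⟩ := hcross c d hc hd hrz
    obtain ⟨b4, b4I, b4C⟩ := hcross c' d' hc' hd' hrz'
    have b1W := p11.1 b1 (d.IK _ b1I) (c.CK _ b1C)
    have b2W := p22.1 b2 (d'.IK _ b2I) (c'.CK _ b2C)
    have b3U := p11.2.1 b3 (c.IK _ b3I) (d.CK _ b3C)
    have b4U := p22.2.1 b4 (c'.IK _ b4I) (d'.CK _ b4C)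
    have Wd : Disjoint W d.C := Set.disjoint_left.2 fun y h1 h2 => p11.2.2.2.1 y h1 (d.CK y h2)
    have Wd' : Disjoint W d'.C :=
      Set.disjoint_left.2 fun y h1 h2 => p21.2.2.2.1 y h1 (d'.CK y h2)
    have Uc : Disjoint U c.C := Set.disjoint_left.2 fun y h1 h2 => p11.2.2.2.2 y h1 (c.CK y h2)
    have Uc' : Disjoint U c'.C :=
      Set.disjoint_left.2 fun y h1 h2 => p12.2.2.2.2 y h1 (c'.CK y h2)
    obtain ⟨a, ha⟩ := d.cover (c.CB c.qC) (fun h => D11.le_bot ⟨h, c.qC⟩)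
    obtain ⟨a', ha'⟩ := d'.cover (c'.CB c'.qC) (fun h => D22.le_bot ⟨h, c'.qC⟩)
    have s1 : r' ∈ d.S a := SD.transfer d c c' D11 D12 hWc hWB Wd b1W b2W b1C b2C ha
    have s2 : r ∈ d'.S a' := SD.transfer d' c' c D22 D21 hWc hWB Wd' b2W b1W b2C b1C ha'
    have s3 : q ∈ c.S (!a) := hopp d c hd hc hqz D11 ha
    have s4 : q' ∈ c'.S (!a') := hopp d' c' hd' hc' hqz' D22 ha'
    have s5 : q' ∈ c.S (!a) :=
      SD.transfer c d d' D11.symm D21.symm hUc hUB Uc b3U b4U b3C b4C s3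
    have s6 : q ∈ c'.S (!a') :=
      SD.transfer c' d' d D22.symm D12.symm hUc hUB Uc' b4U b3U b4C b3C s4
    have k1 : ∀ j, v₁ j = !a → v₂ j = !a' := fun j hj =>
      type_rel hVne hBc d c' D12 hd hc' s1 s6 j hj
    have k2 : ∀ j, v₂ j = !a' → v₁ j = !a := fun j hj =>
      type_rel hVne hBc d' c D21 hd' hc s2 s5 j hj
    have k3 : a = a' := by
      have m1 := k1 j0
      have m2 := k2 j0
      rw [hd0, hd0'] at m1
      rw [hd0, hd0'] at m2
      exact bool_aux1 a a' m1 m2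
    refine hne (funext fun j => ?_)
    have m1 := k1 j
    have m2 := k2 j
    subst k3
    exact bool_aux2 a _ _ m1 m2
  refine ⟨η, hη, (fun p : (t → Bool) × (t → Bool) => closure (Pt p.1) ∩ closure (Pt p.2)) ''
    {p | p.1 ≠ p.2}, (Set.toFinite _).image _, ?_, ?_⟩
  · rintro _ ⟨⟨v₁, v₂⟩, hne, rfl⟩ x ⟨hx1, hx2⟩ y ⟨hy1, hy2⟩
    exact claim v₁ v₂ hne x y hx1 hx2 hy1 hy2
  · intro x hxz hnR
    by_contra hcon
    apply hnR
    have huniq : ∀ v₁ v₂, x ∈ closure (Pt v₁) → x ∈ closure (Pt v₂) → v₁ = v₂ := by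
      intro v₁ v₂ h1 h2
      by_contra hne
      exact hcon ⟨_, ⟨(v₁, v₂), hne, rfl⟩, h1, h2⟩
    have hnear : ∀ y ∈ ball z η, ∀ O : Set X, IsOpen O → y ∈ O →
        y ∈ closure (⋃ v, Pt v ∩ O) := by
      intro y hy O hO hyO
      have := hdense.open_subset_closure_inter (isOpen_ball.inter hO) ⟨hy, hyO⟩
      refine closure_mono ?_ this
      rintro q ⟨⟨hqz, hqO⟩, hq⟩
      rw [mem_ball, dist_comm] at hqz
      obtain ⟨d, v, hv, hv0⟩ := hdat q ⟨hq, hqz⟩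
      exact mem_iUnion.2 ⟨v, ⟨hq, hqz, d, hv, hv0⟩, hqO⟩
    have hxcl : ∃ v, x ∈ closure (Pt v) := by
      have := hnear x hxz univ isOpen_univ (mem_univ _)
      rw [closure_iUnion_of_finite] at this
      obtain ⟨v, hv⟩ := mem_iUnion.1 this
      exact ⟨v, closure_mono inter_subset_left hv⟩
    obtain ⟨v, hv⟩ := hxcl
    have hev : ∀ᶠ y in 𝓝 x, ∀ v', v' ≠ v → y ∉ closure (Pt v') := by
      rw [Filter.eventually_all]
      intro v'
      by_cases hvv : v' = v
      · exact Eventually.of_forall fun y h => absurd hvv h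
      · have : x ∉ closure (Pt v') := fun h => hvv (huniq _ _ h hv)
        filter_upwards [isClosed_closure.isOpen_compl.mem_nhds this] with y hy _
        exact hy
    obtain ⟨s, hs, hball⟩ := Metric.eventually_nhds_iff_ball.1
      (hev.and (isOpen_ball.mem_nhds hxz))
    have hcl : ∀ y ∈ ball x s, y ∈ closure (Pt v) := by
      intro y hy
      refine closure_mono ?_ (hnear y (hball y hy).2 _ isOpen_ball hy)
      refine iUnion_subset fun v' => ?_
      rintro q ⟨hq, hqO⟩
      by_cases hvv : v' = v
      · rwa [← hvv]
      · exact absurd (subset_closure hq) ((hball q hqO).1 v' hvv)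
    refine ⟨s, hs, fun a ha b hb => ?_⟩
    obtain ⟨w, -, h1, h2⟩ := hbrc v a b (hcl a ha) (hcl b hb)
    exact ⟨w, h1, h2⟩
end part7

/-! ## Part 8: finiteness of the non-product points -/

section part8
open Topology Filter
variable {X : Type*} [MetricSpace X] {f : X ≃ₜ X} {α ε : ℝ}

lemma reg_shift [CompactSpace X] (hx : Xp f α) (h0 : 0 < ε) (hε : 4 * ε ≤ α) {x : X}
    (h : Reg f ε (f.symm x)) : Reg f ε x := by
  obtain ⟨r, hr, hreg⟩ := h
  have hW : IsOpen (f ⁻¹' ball x (ε / 2)) := isOpen_ball.preimage f.continuous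
  have e1 := bracket_near hx (by linarith) (RS.refl' (f := f.symm) h0.le (f.symm x))
    (RS.refl' (f := f) h0.le (f.symm x)) hW (by simp [h0])
  obtain ⟨O, hO, O', hO', hsub⟩ := Filter.mem_prod_iff.1 e1
  have hO2 : f.symm ⁻¹' (O ∩ O' ∩ ball (f.symm x) r) ∈ 𝓝 x :=
    f.symm.continuous.continuousAt.preimage_mem_nhds
      (inter_mem (inter_mem hO hO') (ball_mem_nhds _ hr))
  obtain ⟨s, hs, hball⟩ := Metric.mem_nhds_iff.1
    (inter_mem hO2 (ball_mem_nhds x (half_pos h0)))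
  refine ⟨s, hs, fun u hu v hv => ?_⟩
  obtain ⟨w', h1, h2⟩ := hreg _ (hball hu).1.2 _ (hball hv).1.2
  have hw := hsub (show (f.symm u, f.symm v) ∈ O ×ˢ O' from
    ⟨(hball hu).1.1.1, (hball hv).1.1.2⟩) w' h1 h2
  refine ⟨f w', fun k => ?_, ?_⟩
  · cases k with
    | zero =>
      have k1 : dist (f w') x < ε / 2 := hw
      have k2 : dist u x < ε / 2 := (hball hu).2
      have := dist_triangle_right u (f w') x
      simp only [Function.iterate_zero, id]
      linarith
    | succ k =>
      rw [Function.iterate_succ_apply, Function.iterate_succ_apply, f.symm_apply_apply]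
      exact h1 k
  · have := h2.shift 1
    simpa using this

lemma not_reg_iter [CompactSpace X] (hx : Xp f α) (h0 : 0 < ε) (hε : 4 * ε ≤ α) {x : X}
    (h : ¬ Reg f ε x) (k : ℕ) : ¬ Reg f ε (f.symm^[k] x) := by
  induction k with
  | zero => exact h
  | succ k ih =>
    rw [Function.iterate_succ_apply']
    exact fun h' => ih (reg_shift hx h0 hε h')

lemma finite_not_reg [CompactSpace X] (hx : Xp f α) (h0 : 0 < ε) (hε : 4 * ε ≤ α)
    (hloc : ∀ z : X, ∃ η > 0, ∃ F : Set (Set X), F.Finite ∧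
      (∀ A ∈ F, ∀ x ∈ A, ∀ y ∈ A, RS f ε x y) ∧
      ∀ x ∈ ball z η, ¬ Reg f ε x → ∃ A ∈ F, x ∈ A) : {x | ¬ Reg f ε x}.Finite := by
  classical
  choose η hη F hF1 hF2 hF3 using hloc
  obtain ⟨t, -, ht⟩ := isCompact_univ.elim_nhds_subcover (fun z : X => ball z (η z))
    (fun z _ => ball_mem_nhds z (hη z))
  let G : Set (Set X) := ⋃ z ∈ t, F z
  have hG : G.Finite := t.finite_toSet.biUnion fun z _ => hF1 z
  have hG2 : ∀ A ∈ G, ∀ x ∈ A, ∀ y ∈ A, RS f ε x y := by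
    intro A hA
    simp only [G, mem_iUnion] at hA
    obtain ⟨z, -, hz⟩ := hA
    exact hF2 z A hz
  have hG3 : ∀ x, ¬ Reg f ε x → ∃ A ∈ G, x ∈ A := by
    intro x hxr
    obtain ⟨z, hz, hxz⟩ := mem_iUnion₂.1 (ht (mem_univ x))
    obtain ⟨A, hA, hxA⟩ := hF3 z x hxz hxr
    exact ⟨A, mem_iUnion₂.2 ⟨z, hz, hA⟩, hxA⟩
  by_contra hinf
  obtain ⟨s, hs, hcard⟩ := Set.Infinite.exists_subset_card_eq hinf (hG.toFinset.card + 1)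
  have hpair : ∀ k : ℕ, ∃ p : s × s, p.1 ≠ p.2 ∧ RS f ε (f.symm^[k] p.1) (f.symm^[k] p.2) := by
    intro k
    have hA : ∀ y : X, ∃ A : Set X, y ∈ s → A ∈ G ∧ f.symm^[k] y ∈ A := by
      intro y
      by_cases hy : y ∈ s
      · obtain ⟨A, hA, hA'⟩ := hG3 _ (not_reg_iter hx h0 hε (hs hy) k)
        exact ⟨A, fun _ => ⟨hA, hA'⟩⟩
      · exact ⟨∅, fun h => absurd h hy⟩
    choose A hA using hA
    obtain ⟨y, hy, y', hy', hne, hyy⟩ := Finset.exists_ne_map_eq_of_card_lt_of_maps_to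
      (s := s) (t := hG.toFinset) (f := A) (by rw [hcard]; exact Nat.lt_succ_self _)
      (fun y hy => by simpa using (hA y hy).1)
    refine ⟨(⟨y, hy⟩, ⟨y', hy'⟩), fun h => hne (congrArg Subtype.val h), ?_⟩
    exact hG2 _ (hA y hy).1 _ (hA y hy).2 _ (hyy ▸ (hA y' hy').2)
  choose p hp1 hp2 using hpair
  obtain ⟨pr, hpr⟩ := Finite.exists_infinite_fiber p
  have hinf2 : (p ⁻¹' {pr}).Infinite := Set.infinite_coe_iff.1 hpr
  have hbig : ∀ n : ℕ, ∃ k ≥ n, RS f ε (f.symm^[k] pr.1) (f.symm^[k] pr.2) := by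
    intro n
    obtain ⟨k, hk, hkn⟩ := hinf2.exists_gt n
    have hk' : p k = pr := hk
    exact ⟨k, hkn.le, hk' ▸ hp2 k⟩
  have hne : pr.1 ≠ pr.2 := by
    obtain ⟨k, hk⟩ := hinf2.nonempty
    have hk' : p k = pr := hk
    exact hk' ▸ hp1 k
  refine hne (Subtype.ext (hx _ _ (fun j => ?_) (fun j => ?_)))
  · obtain ⟨k, -, hk⟩ := hbig 0
    have := hk (j + k)
    rw [Function.iterate_add_apply, Function.iterate_add_apply, iter_symm_iter,
      iter_symm_iter] at this
    linarith
  · obtain ⟨k, hkj, hk⟩ := hbig j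
    obtain ⟨i, rfl⟩ := Nat.exists_eq_add_of_le hkj
    have := hk i
    rw [add_comm, Function.iterate_add_apply, Function.iterate_add_apply, iter_symm_iter,
      iter_symm_iter] at this
    linarith
end part8

/-! ## Part 9: product-like points admit a local product structure -/

section part9
open Topology Filter
variable {X : Type*} [MetricSpace X] {f : X ≃ₜ X} {α ε : ℝ}
variable {E₁ E₂ : Type*} [NormedAddCommGroup E₁] [NormedSpace ℝ E₁]
  [NormedAddCommGroup E₂] [NormedSpace ℝ E₂]

lemma disc_param [CompactSpace X] (hx : Xp f α) (hε : ε ≤ α) (h0 : 0 < ε) {l : ℕ} {q : X}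
    {φ₀ : OpenPartialHomeomorph X (E₁ × E₂)} (h : HypChart f l q φ₀) {y : X} (h1 : RS f ε q y)
    (h2 : RS f (ε / 2) q y) {O : Set X} (hO : O ∈ 𝓝 y) :
    ∃ (a : E₁) (s : ℝ) (γ : E₁ → X), 0 < s ∧ ContinuousOn γ (closedBall a s) ∧
      InjOn γ (closedBall a s) ∧ (∀ v ∈ closedBall a s, γ v ∈ O ∧ RS f ε q (γ v)) ∧ γ a = y := by
  obtain ⟨φ, -, -, -, -, -, -, hs, hev, -⟩ := plaque hx hε h0 h
  obtain ⟨hys, hy2⟩ := hs y h1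
  have hpair : ((φ y).1, (0 : E₂)) = φ y := by rw [← hy2]
  have hγy : φ.symm ((φ y).1, 0) = y := by rw [hpair, φ.left_inv hys]
  have ht : ((φ y).1, (0 : E₂)) ∈ φ.target := by rw [hpair]; exact φ.map_source hys
  have hc : ContinuousAt (fun v : E₁ => φ.symm (v, (0 : E₂))) (φ y).1 :=
    ContinuousAt.comp (f := fun v : E₁ => (v, (0 : E₂))) (φ.symm.continuousAt ht)
      (by fun_prop)
  have e2 : ∀ᶠ v in 𝓝 (φ y).1, φ.symm (v, (0 : E₂)) ∈ O := by
    apply hc.eventually_mem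
    simpa [hγy] using hO
  obtain ⟨s, hs0, hsb⟩ := Metric.nhds_basis_closedBall.eventually_iff.1 ((hev y h1 h2).and e2)
  refine ⟨(φ y).1, s, fun v => φ.symm (v, 0), hs0, ?_, ?_, ?_, hγy⟩
  · intro v hv
    exact (ContinuousAt.comp (f := fun v : E₁ => (v, (0 : E₂)))
      (φ.symm.continuousAt (hsb hv).1.1) (by fun_prop)).continuousWithinAt
  · intro v hv w hw hvw
    have := φ.symm.injOn (hsb hv).1.1 (hsb hw).1.1 hvw
    exact (Prod.ext_iff.1 this).1
  · intro v hv
    exact ⟨(hsb hv).2, (hsb hv).1.2⟩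

lemma embed_ball (E : Type*) [NormedAddCommGroup E] [NormedSpace ℝ E] (a : E) {s : ℝ}
    (hs : 0 < s) : ∃ g : E → closedBall a s, IsEmbedding g ∧ (g 0 : E) = a := by
  let e : E → E := fun x => a + s • (Homeomorph.unitBall x : E)
  have he : IsEmbedding e := by
    have h1 : IsEmbedding (fun x : E => ((Homeomorph.unitBall x : ball (0:E) 1) : E)) :=
      IsEmbedding.subtypeVal.comp Homeomorph.unitBall.isEmbedding
    have h2 := (Homeomorph.smulOfNeZero s hs.ne' (α := E)).isEmbedding.comp h1
    exact (Homeomorph.addLeft a).isEmbedding.comp h2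
  have hm : ∀ x, e x ∈ closedBall a s := by
    intro x
    have := (Homeomorph.unitBall x).2
    rw [mem_ball_zero_iff] at this
    simp only [e, mem_closedBall, dist_self_add_left, norm_smul, Real.norm_eq_abs, abs_of_pos hs]
    nlinarith
  refine ⟨Set.codRestrict e _ hm, he.codRestrict _ hm, ?_⟩
  simp [e]

lemma core_LPS [CompactSpace X] {K₁ K₂ : Type*} [TopologicalSpace K₁] [CompactSpace K₁]
    [TopologicalSpace K₂] [CompactSpace K₂]
    (hx : Xp f α) (h0 : 0 < ε) (hε : 4 * ε ≤ α) {q : X}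
    {β : K₁ → X} {γ : K₂ → X} (hβ : Continuous β) (hγ : Continuous γ)
    (iβ : Function.Injective β) (iγ : Function.Injective γ)
    (qβ : ∀ t, RS f.symm ε q (β t)) (qγ : ∀ a, RS f ε q (γ a))
    (hbr : ∀ t a, ∃ w, RS f.symm ε (γ a) w ∧ RS f ε (β t) w) :
    ∃ H : K₁ × K₂ → X, IsEmbedding H ∧
      (∀ p, RS f.symm ε (γ p.2) (H p) ∧ RS f ε (β p.1) (H p)) ∧
      (∀ p p', RS f (2 * ε) (H p) (H p') ↔ p.1 = p'.1) ∧
      (∀ p p', RS f.symm (2 * ε) (H p) (H p') ↔ p.2 = p'.2) := by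
  choose H' h1 h2 using hbr
  have hS : ∀ p p' : K₁ × K₂, RS f (2 * ε) (H' p.1 p.2) (H' p'.1 p'.2) ↔ p.1 = p'.1 := by
    intro p p'
    constructor
    · intro h
      apply iβ
      refine hx _ _ ((((h2 p.1 p.2).tri h).tri (h2 p'.1 p'.2).sym).mono (by linarith))
        (((qβ p.1).sym.tri (qβ p'.1)).mono (by linarith))
    · intro h
      have a1 := h2 p.1 p.2
      have a2 := h2 p'.1 p'.2
      rw [← h] at a2 ⊢
      exact (a1.sym.tri a2).mono (by linarith)
  have hU : ∀ p p' : K₁ × K₂, RS f.symm (2 * ε) (H' p.1 p.2) (H' p'.1 p'.2) ↔ p.2 = p'.2 := by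
    intro p p'
    constructor
    · intro h
      apply iγ
      refine hx _ _ (((qγ p.2).sym.tri (qγ p'.2)).mono (by linarith))
        ((((h1 p.1 p.2).tri h).tri (h1 p'.1 p'.2).sym).mono (by linarith))
    · intro h
      have a1 := h1 p.1 p.2
      have a2 := h1 p'.1 p'.2
      rw [← h] at a2 ⊢
      exact (a1.sym.tri a2).mono (by linarith)
  refine ⟨fun p => H' p.1 p.2, ?_, fun p => ⟨h1 _ _, h2 _ _⟩, hS, hU⟩
  have hcont : Continuous (fun p : K₁ × K₂ => H' p.1 p.2) := by
    rw [continuous_iff_continuousAt]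
    intro p
    rw [ContinuousAt, _root_.tendsto_nhds]
    intro W hW hw
    have e := bracket_near hx (by linarith) (h1 p.1 p.2) (h2 p.1 p.2) hW hw
    have ht : Tendsto (fun p' : K₁ × K₂ => (γ p'.2, β p'.1)) (𝓝 p) (𝓝 (γ p.2) ×ˢ 𝓝 (β p.1)) := by
      rw [← nhds_prod_eq]
      exact Continuous.tendsto (by fun_prop) p
    filter_upwards [ht.eventually e] with p' hp'
    exact hp' _ (h1 _ _) (h2 _ _)
  have hinj : Function.Injective (fun p : K₁ × K₂ => H' p.1 p.2) := by
    intro p p' h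
    dsimp only at h
    refine Prod.ext ((hS p p').1 ?_) ((hU p p').1 ?_)
    · rw [h]; exact RS.refl' (by linarith) _
    · rw [h]; exact RS.refl' (by linarith) _
  exact (hcont.isClosedEmbedding hinj).isEmbedding

lemma lps_of_reg [CompactSpace X] (hx : Xp f α) (h0 : 0 < ε) (hε : 4 * ε ≤ α) {δ : ℝ} (hδ : 0 < δ)
    (hδs : ∀ x y, RS f ε x y → dist x y < δ → RS f (ε / 2) x y)
    (hδu : ∀ x y, RS f.symm ε x y → dist x y < δ → RS f.symm (ε / 2) x y)
    {m : ℕ} {Per : Set X} (hdense : Dense Per) (hper : ∀ q ∈ Per, Hp (Fin m → ℝ) f q) {x : X}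
    (hreg : Reg f ε x) : AdmitsLPS f (m + 1) x := by
  obtain ⟨r, hr, hreg⟩ := hreg
  have hW : x ∈ ball x (min r (δ / 2)) := mem_ball_self (by positivity)
  have e := bracket_near hx (by linarith) (RS.refl' (f := f.symm) h0.le x)
    (RS.refl' (f := f) h0.le x) (isOpen_ball (x := x) (ε := min r (δ / 2))) hW
  obtain ⟨O, hO, O', hO', hsub⟩ := Filter.mem_prod_iff.1 e
  have hN : O ∩ O' ∩ ball x (min r (δ / 2)) ∈ 𝓝 x :=
    inter_mem (inter_mem hO hO') (isOpen_ball.mem_nhds hW)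
  obtain ⟨q, hqP, hqN⟩ := hdense.inter_nhds_nonempty hN
  obtain ⟨⟨hqO, hqO'⟩, hqb⟩ := hqN
  have hb1 : ball x (min r (δ / 2)) ⊆ ball x r := ball_subset_ball (min_le_left _ _)
  have hb2 : ∀ y ∈ ball x (min r (δ / 2)), dist q y < δ := by
    intro y hy
    have a := ball_subset_ball (min_le_right r (δ / 2)) hy
    have b := ball_subset_ball (min_le_right r (δ / 2)) hqb
    rw [mem_ball] at a b
    linarith [dist_triangle_right q y x]
  obtain ⟨u0, hu1, hu2⟩ := hreg q (hb1 hqb) x (mem_ball_self hr)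
  obtain ⟨s0, hs1, hs2⟩ := hreg x (mem_ball_self hr) q (hb1 hqb)
  have hu0 : u0 ∈ ball x (min r (δ / 2)) :=
    hsub (a := (q, x)) ⟨hqO, mem_of_mem_nhds hO'⟩ u0 hu1 hu2
  have hs0 : s0 ∈ ball x (min r (δ / 2)) :=
    hsub (a := (x, q)) ⟨mem_of_mem_nhds hO, hqO'⟩ s0 hs1 hs2
  obtain ⟨l, φ, hφ⟩ := hper q hqP
  obtain ⟨a, s, γ, hs, hγc, hγi, hγ, hγa⟩ := disc_param hx (by linarith) h0 hφ hs2
    (hδs _ _ hs2 (hb2 _ hs0)) (isOpen_ball.mem_nhds (hb1 hs0))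
  obtain ⟨b, t, β, ht, hβc, hβi, hβ, hβb⟩ := disc_param hx.sym (by linarith) h0 hφ.swap hu1
    (hδu _ _ hu1 (hb2 _ hu0)) (isOpen_ball.mem_nhds (hb1 hu0))
  have : CompactSpace (closedBall b t) := isCompact_iff_compactSpace.1 (isCompact_closedBall b t)
  have : CompactSpace (closedBall a s) := isCompact_iff_compactSpace.1 (isCompact_closedBall a s)
  obtain ⟨H, hH, hHb, hHs, hHu⟩ := core_LPS (K₁ := closedBall b t) (K₂ := closedBall a s)
    (β := fun v => β v) (γ := fun v => γ v) hx h0 hε (q := q)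
    (continuousOn_iff_continuous_domRestrict.1 hβc) (continuousOn_iff_continuous_domRestrict.1 hγc)
    (injOn_iff_injective.1 hβi) (injOn_iff_injective.1 hγi)
    (fun v => (hβ v v.2).2) (fun v => (hγ v v.2).2)
    (fun v w => hreg _ (hγ w w.2).1 _ (hβ v v.2).1)
  obtain ⟨g₁, hg₁, hg₁0⟩ := embed_ball ℝ b ht
  obtain ⟨g₂, hg₂, hg₂0⟩ := embed_ball (Fin m → ℝ) a hs
  have hg₁' : IsEmbedding (fun v : Fin 1 → ℝ => g₁ (v 0)) :=
    hg₁.comp (Homeomorph.funUnique (Fin 1) ℝ).isEmbedding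
  have i₁ := hg₁'.injective
  have i₂ := hg₂.injective
  refine ⟨1, fun p => H (g₁ (p.1 0), g₂ p.2), 2 * ε, by linarith, ?_, ?_, ?_⟩
  · exact hH.comp (hg₁'.prodMap hg₂)
  · refine ⟨(0, 0), ?_⟩
    have := hHb (g₁ 0, g₂ 0)
    simp only [hg₁0, hg₂0, hγa, hβb] at this
    exact xp_unique hx (by linarith) this.2 hu2.sym this.1 hs1.sym
  · intro v w
    constructor
    · ext z
      simp only [mem_inter_iff, mem_WsLoc, mem_image, mem_range, mem_prod, mem_singleton_iff,
        mem_univ, and_true]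
      constructor
      · rintro ⟨p, hp, rfl⟩
        exact ⟨(hHs _ _).2 (by simp [hp]), p, rfl⟩
      · rintro ⟨h, p, rfl⟩
        exact ⟨p, (i₁ ((hHs _ _).1 h)).symm, rfl⟩
    · ext z
      simp only [mem_inter_iff, mem_WuLoc, mem_image, mem_range, mem_prod, mem_singleton_iff,
        mem_univ, true_and]
      constructor
      · rintro ⟨p, hp, rfl⟩
        exact ⟨(hHu _ _).2 (by simp [hp]), p, rfl⟩
      · rintro ⟨h, p, rfl⟩
        exact ⟨p, (i₂ ((hHu _ _).1 h)).symm, rfl⟩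

end part9

/-- **Lemma (finitely many singularities).** If `f` is an expansive homeomorphism of a
compact connected boundaryless `n`-manifold with `Per_H^{n-1}` dense, then the set of
singularities (points with no local product structure) is finite. -/
theorem stmt18 {M : Type*} [MetricSpace M] [CompactSpace M] [ConnectedSpace M]
    (n : ℕ) [ChartedSpace (EuclideanSpace ℝ (Fin n)) M]
    (f : M ≃ₜ M) (α : ℝ) (hα : 0 < α) (hexp : IsExpansive f α)
    (hdense : closure (PerHr f n (n - 1)) = Set.univ) :
    {p : M | ¬ AdmitsLPS f n p}.Finite := by
  rcases subsingleton_or_nontrivial M with hM | hM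
  · exact Set.toFinite _
  rcases n with _ | m
  · have : DiscreteTopology M := by
      rw [discreteTopology_iff_isOpen_singleton]
      intro x
      have : (chartAt (EuclideanSpace ℝ (Fin 0)) x).source = {x} := by
        refine Subset.antisymm ?_ (by simp)
        intro y hy
        exact (chartAt (EuclideanSpace ℝ (Fin 0)) x).injOn hy (mem_chart_source _ x)
          (Subsingleton.elim _ _)
      rw [← this]
      exact (chartAt (EuclideanSpace ℝ (Fin 0)) x).open_source
    have : Finite M := finite_of_compact_of_discrete
    exact Set.toFinite _
  have hx := xp_of_isExpansive hexp
  have h0 : 0 < α / 4 := by linarith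
  obtain ⟨δ₁, hδ₁, hs⟩ := exists_delta hx (ε := α / 4) (by linarith) h0
  obtain ⟨δ₂, hδ₂, hu⟩ := exists_delta hx.sym (ε := α / 4) (by linarith) h0
  have hδ : 0 < min δ₁ δ₂ := lt_min hδ₁ hδ₂
  generalize hδe : min δ₁ δ₂ = δ at hδ
  have hδs : ∀ x y, RS f (α / 4) x y → dist x y < δ → RS f (α / 4 / 2) x y := fun x y h h' =>
    hs x y h (h'.trans_le (hδe ▸ min_le_left _ _))
  have hδu : ∀ x y, RS f.symm (α / 4) x y → dist x y < δ → RS f.symm (α / 4 / 2) x y :=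
    fun x y h h' => hu x y h (h'.trans_le (hδe ▸ min_le_right _ _))
  have hd : Dense (PerHr f (m + 1) (m + 1 - 1)) := dense_iff_closure_eq.2 hdense
  have hP : ∀ q ∈ PerHr f (m + 1) (m + 1 - 1), Hp (Fin m → ℝ) f q := fun q hq =>
    chart_of_perHr hq
  have : LocallyConnectedSpace M :=
    ChartedSpace.locallyConnectedSpace (EuclideanSpace ℝ (Fin (m + 1))) M
  refine (finite_not_reg hx h0 (by linarith) ?_).subset ?_
  · intro z
    obtain ⟨B, hB, hzB, hBr, hBc, hsc, hlp⟩ := exists_box (m + 1) z (half_pos hδ)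
    obtain ⟨ρ₀, hρ₀, hρB⟩ := Metric.nhds_basis_closedBall.mem_iff.1 (hB.mem_nhds hzB)
    have hρ : 0 < min ρ₀ (δ / 2) := lt_min hρ₀ (half_pos hδ)
    have hsub : closedBall z (min ρ₀ (δ / 2)) ⊆ B :=
      (closedBall_subset_closedBall (min_le_left _ _)).trans hρB
    refine local_finite hx h0 (by linarith) hB
      (isPreconnected_iff_preconnectedSpace.2 inferInstance) hρ hsub hd
      (fun q hq => ?_) (fun q hq hzq => ?_)
    · obtain ⟨l, φ, h⟩ := hP q hq
      exact ⟨l, h.1, h.2.1⟩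
    · refine exists_SD hx h0 (by linarith) hδ hδs hδu (hP q hq) hB ?_ hBc hsub ?_ hzq
      · intro x hx y hy
        have h1 := hBr hx
        have h2 := hBr hy
        rw [mem_ball] at h1 h2
        linarith [dist_triangle_right x y z]
      · linarith [min_le_right ρ₀ (δ / 2)]
  · intro p hp hreg
    exact hp (lps_of_reg hx h0 (by linarith) hδ hδs hδu hd hP hreg)
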